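/- arXiv:2006.15393 — 4 statements merged into one kernel-verified Lean document; each statement's English description precedes it below -/
import Mathlib

section
/- Let S be a right reversible and left amenable semitopological semigroup, and let K be a weakly compact convex subset of a Banach space. Then every jointly weakly continuous and super asymptotically nonexpansive action of S on K has a common fixed point. -/
/-- A (nonempty) left ideal of a semigroup `S`: `I ≠ ∅` and `S * I ⊆ I`. -/
def IsLeftIdeal {S : Type*} [Semigroup S] (I : Set S) : Prop :=
  I.Nonempty ∧ ∀ s : S, ∀ i ∈ I, s * i ∈ I

/-- `S` is right reversible: any two closed left ideals of `S` intersect. -/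
def RightReversible (S : Type*) [Semigroup S] [TopologicalSpace S] : Prop :=
  ∀ I J : Set S, IsLeftIdeal I → IsLeftIdeal J → IsClosed I → IsClosed J → (I ∩ J).Nonempty

/-- The left translation `l_s f`, `l_s f (t) = f (s * t)`, of a bounded continuous
function `f` on `S` (the continuity of `t ↦ s * t` being supplied as a hypothesis). -/
noncomputable def lTrans {S : Type*} [Mul S] [TopologicalSpace S] (s : S)
    (hc : Continuous fun t => s * t) (f : BoundedContinuousFunction S ℝ) :
    BoundedContinuousFunction S ℝ :=
  f.compContinuous ⟨fun t => s * t, hc⟩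

/-- `f ∈ LUC(S)`: the map `s ↦ l_s f` is norm continuous from `S` into `CB(S)`. -/
def IsLUC {S : Type*} [Mul S] [TopologicalSpace S]
    (hmulL : ∀ s : S, Continuous fun t => s * t) (f : BoundedContinuousFunction S ℝ) :
    Prop :=
  Continuous fun s : S => lTrans s (hmulL s) f

/-- `LUC(S)` admits a left invariant mean: there is a linear functional `m` on `CB(S)`
with `‖m‖ ≤ 1`, `m(1) = 1` (hence `‖m‖ = m(1) = 1`), and `m (l_s f) = m f` for every
`s ∈ S` and every `f ∈ LUC(S)`.  (`S` is then called left amenable.) -/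
def LeftAmenable {S : Type*} [Mul S] [TopologicalSpace S]
    (hmulL : ∀ s : S, Continuous fun t => s * t) : Prop :=
  ∃ m : BoundedContinuousFunction S ℝ →ₗ[ℝ] ℝ,
    (∀ f, |m f| ≤ ‖f‖) ∧ m 1 = 1 ∧
    ∀ s : S, ∀ f : BoundedContinuousFunction S ℝ, IsLUC hmulL f →
      m (lTrans s (hmulL s) f) = m f

/-- Super asymptotically nonexpansive action. -/
def SuperAsympNonexpansive {S E : Type*} [Semigroup S] [NormedAddCommGroup E]
    (act : S → E → E) (K : Set E) : Prop :=
  ∀ x ∈ K, ∀ t : S, ∃ I : Set S, IsLeftIdeal I ∧ I ⊆ Set.range (· * t) ∧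
    ∀ s ∈ I, ∀ y ∈ K, ‖act s x - act s y‖ ≤ ‖x - y‖

open Set Filter Topology in
lemma aux_wclosed {Z E : Type*} [TopologicalSpace Z] [NormedAddCommGroup E] [NormedSpace ℝ E]
    (g : Z → E) (hg : ∀ f : E →L[ℝ] ℝ, Continuous fun z => f (g z))
    (C : Set E) (hC : Convex ℝ C) (hcl : IsClosed C) : IsClosed (g ⁻¹' C) := by
  rw [← isOpen_compl_iff, isOpen_iff_mem_nhds]
  intro z hz
  obtain ⟨f, u, h1, h2⟩ := geometric_hahn_banach_point_closed hC hcl (x := g z) hz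
  filter_upwards [(isOpen_lt (hg f) continuous_const).mem_nhds h1] with w hw hwC
  exact absurd (h2 _ hwC) (not_lt.mpr (le_of_lt hw))

lemma aux_norm_closed {Z E : Type*} [TopologicalSpace Z] [NormedAddCommGroup E] [NormedSpace ℝ E]
    (g h : Z → E) (hg : ∀ f : E →L[ℝ] ℝ, Continuous fun z => f (g z))
    (hh : ∀ f : E →L[ℝ] ℝ, Continuous fun z => f (h z)) (c : ℝ) :
    IsClosed {z | ‖g z - h z‖ ≤ c} := by
  have := aux_wclosed (fun z => g z - h z) (fun f => by
    simp only [map_sub]; exact (hg f).sub (hh f)) (Metric.closedBall 0 c) (convex_closedBall _ _)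
    Metric.isClosed_closedBall
  simpa [Set.preimage] using this

open Set Filter Topology in
lemma aux_split {X E : Type*} [TopologicalSpace X] [CompactSpace X] [T2Space X]
    [NormedAddCommGroup E] [NormedSpace ℝ E] (ι : X → E)
    (hι : ∀ f : E →L[ℝ] ℝ, Continuous fun z => f (ι z)) (ε : ℝ)
    (U : Set X) (hU : IsOpen U) (x y : X) (hx : x ∈ U) (hy : y ∈ U) (hxy : ε < ‖ι x - ι y‖) :
    ∃ V : Bool → Set X, (∀ b, IsOpen (V b) ∧ (V b).Nonempty ∧ V b ⊆ U) ∧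
      ∀ p ∈ closure (V true), ∀ q ∈ closure (V false), ε < ‖ι p - ι q‖ := by
  obtain ⟨f, hf1, hf2⟩ := exists_dual_vector'' ℝ (ι x - ι y)
  have hf2' : f (ι x) - f (ι y) = ‖ι x - ι y‖ := by simpa using hf2
  set δ := (‖ι x - ι y‖ - ε) / 2 with hδ
  have hδ0 : 0 < δ := by rw [hδ]; linarith
  have key : ∀ (z : X) (W : Set X), IsOpen W → z ∈ W → ∃ V, IsOpen V ∧ z ∈ V ∧ closure V ⊆ W := by
    intro z W hW hz
    obtain ⟨t, ht, htc, hts⟩ := exists_mem_nhds_isClosed_subset (hW.mem_nhds hz)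
    exact ⟨interior t, isOpen_interior, mem_interior_iff_mem_nhds.mpr ht,
      (closure_minimal interior_subset htc).trans hts⟩
  obtain ⟨V0, h0, hx0, hc0⟩ := key x (U ∩ {p | f (ι x) - δ < f (ι p)})
    (hU.inter (isOpen_lt continuous_const (hι f))) ⟨hx, by simp [hδ0]⟩
  obtain ⟨V1, h1, hx1, hc1⟩ := key y (U ∩ {p | f (ι p) < f (ι y) + δ})
    (hU.inter (isOpen_lt (hι f) continuous_const)) ⟨hy, by simp [hδ0]⟩
  refine ⟨fun b => if b then V0 else V1, ?_, ?_⟩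
  · intro b
    cases b
    · simpa using ⟨h1, ⟨y, hx1⟩, fun z hz => (hc1 (subset_closure hz)).1⟩
    · simpa using ⟨h0, ⟨x, hx0⟩, fun z hz => (hc0 (subset_closure hz)).1⟩
  · intro p hp q hq
    have hp' : f (ι x) - δ < f (ι p) := (hc0 (by simpa using hp)).2
    have hq' : f (ι q) < f (ι y) + δ := (hc1 (by simpa using hq)).2
    have h3 : f (ι p) - f (ι q) ≤ ‖ι p - ι q‖ := by
      rw [← map_sub]
      refine (le_abs_self _).trans ?_
      have := f.le_of_opNorm_le hf1 (ι p - ι q)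
      simpa using this
    rw [hδ] at hp' hq'
    linarith

def auxPre (β : ℕ → Bool) : ℕ → List Bool
  | 0 => []
  | n + 1 => β n :: auxPre β n

def auxTree {X : Type*} (V : Set X → Bool → Set X) : List Bool → Set X
  | [] => Set.univ
  | b :: l => V (auxTree V l) b

open Set Filter Topology in
/-- Namioka: weakly compact sets are norm-fragmented. -/
lemma aux_fragment {X E : Type*} [TopologicalSpace X] [CompactSpace X] [T2Space X] [Nonempty X]
    [NormedAddCommGroup E] [NormedSpace ℝ E] (ι : X → E)
    (hι : ∀ f : E →L[ℝ] ℝ, Continuous fun z => f (ι z)) (ε : ℝ) (hε : 0 < ε) :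
    ∃ U : Set X, IsOpen U ∧ U.Nonempty ∧ ∀ x ∈ U, ∀ y ∈ U, ‖ι x - ι y‖ ≤ ε := by
  classical
  by_contra hcon
  push Not at hcon
  have hsp : ∀ U : Set X, ∃ V : Bool → Set X, IsOpen U → U.Nonempty →
      (∀ b, IsOpen (V b) ∧ (V b).Nonempty ∧ V b ⊆ U) ∧
      ∀ p ∈ closure (V true), ∀ q ∈ closure (V false), ε < ‖ι p - ι q‖ := by
    intro U
    by_cases h : IsOpen U ∧ U.Nonempty
    · obtain ⟨x, hx, y, hy, hxy⟩ := hcon U h.1 h.2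
      obtain ⟨V, hV⟩ := aux_split ι hι ε U h.1 x y hx hy hxy
      exact ⟨V, fun _ _ => hV⟩
    · exact ⟨fun _ => ∅, fun h1 h2 => absurd ⟨h1, h2⟩ h⟩
  choose V hV using hsp
  set D := auxTree V with hD
  have hDon : ∀ l, IsOpen (D l) ∧ (D l).Nonempty := by
    intro l
    induction l with
    | nil => exact ⟨isOpen_univ, univ_nonempty⟩
    | cons b l ih => exact ⟨((hV _ ih.1 ih.2).1 b).1, ((hV _ ih.1 ih.2).1 b).2.1⟩
  have hDsub : ∀ b l, D (b :: l) ⊆ D l := fun b l =>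
    ((hV _ (hDon l).1 (hDon l).2).1 b).2.2
  have hDsep : ∀ l, ∀ p ∈ closure (D (true :: l)), ∀ q ∈ closure (D (false :: l)),
      ε < ‖ι p - ι q‖ := fun l => (hV _ (hDon l).1 (hDon l).2).2
  choose x hx using fun l => (hDon l).2
  have hanti : ∀ β, Antitone fun n => D (auxPre β n) := fun β =>
    antitone_nat_of_succ_le fun n => hDsub _ _
  have hz : ∀ β : ℕ → Bool, ∃ z : X, z ∈ closure (range x) ∧ ∀ n, z ∈ closure (D (auxPre β n)) := by
    intro β
    have := IsCompact.nonempty_iInter_of_directed_nonempty_isCompact_isClosed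
      (fun n : ℕ => closure ((fun k => x (auxPre β k)) '' Ici n))
      (Antitone.directed_ge fun m n hmn => closure_mono (image_mono (Ici_subset_Ici.mpr hmn)))
      (fun n => (Set.Nonempty.image _ ⟨n, le_refl n⟩).closure)
      (fun n => isClosed_closure.isCompact) (fun n => isClosed_closure)
    obtain ⟨z, hz⟩ := this
    rw [mem_iInter] at hz
    refine ⟨z, closure_mono ?_ (hz 0), fun n => closure_mono ?_ (hz n)⟩
    · rintro _ ⟨k, _, rfl⟩; exact ⟨_, rfl⟩
    · rintro _ ⟨k, hk, rfl⟩; exact hanti β hk (hx _)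
  choose z hz1 hz2 using hz
  have hsep : ∀ β γ, β ≠ γ → ε < ‖ι (z β) - ι (z γ)‖ := by
    intro β γ hne
    have hex : ∃ n, β n ≠ γ n := Function.ne_iff.mp hne
    have hn := Nat.find_spec hex
    have hmin : ∀ m < Nat.find hex, β m = γ m := fun m hm => by
      simpa using Nat.find_min hex hm
    generalize Nat.find hex = n at hn hmin
    have hpre : ∀ k ≤ n, auxPre β k = auxPre γ k := by
      intro k
      induction k with
      | zero => intro _; rfl
      | succ k ih => intro hk; simp only [auxPre]; rw [hmin k hk, ih (by omega)]
    have h1 := hz2 β (n + 1)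
    have h2 := hz2 γ (n + 1)
    simp only [auxPre] at h1 h2
    rw [← hpre n le_rfl] at h2
    cases hb : β n <;> cases hc : γ n
    · simp [hb, hc] at hn
    · rw [hb] at h1; rw [hc] at h2
      rw [norm_sub_rev]
      exact hDsep _ _ h2 _ h1
    · rw [hb] at h1; rw [hc] at h2
      exact hDsep _ _ h1 _ h2
    · simp [hb, hc] at hn
  -- separability
  set M : Set E := closure (Submodule.span ℝ (range fun l => ι (x l)) : Set E) with hM
  have hMsep : TopologicalSpace.IsSeparable M :=
    ((countable_range _).isSeparable.span (R := ℝ)).closure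
  have hMem : ∀ β, ι (z β) ∈ M := by
    intro β
    have hcl := aux_wclosed ι hι M (Submodule.convex _).closure isClosed_closure
    have : closure (range x) ⊆ ι ⁻¹' M := by
      apply closure_minimal _ hcl
      rintro _ ⟨l, rfl⟩
      exact subset_closure (Submodule.subset_span ⟨l, rfl⟩)
    exact this (hz1 β)
  obtain ⟨c, hcc, hcM⟩ := hMsep
  have hch : ∀ β, ∃ d ∈ c, dist (ι (z β)) d < ε / 2 := fun β =>
    Metric.mem_closure_iff.mp (hcM (hMem β)) (ε / 2) (by linarith)
  choose d hdc hdd using hch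
  have hinj : Function.Injective fun β => (⟨d β, hdc β⟩ : c) := by
    intro β γ h
    by_contra hne
    have h' : d β = d γ := congrArg Subtype.val h
    have h1 := hsep β γ hne
    have h2 := hdd β
    have h3 := hdd γ
    rw [← h'] at h3
    rw [← dist_eq_norm] at h1
    have := dist_triangle_right (ι (z β)) (ι (z γ)) (d β)
    linarith
  have : Countable c := hcc.to_subtype
  have hcount : Countable (ℕ → Bool) := hinj.countable
  have h1 := Cardinal.mk_le_aleph0_iff.mpr hcount
  have h2 : Cardinal.mk (ℕ → Bool) = Cardinal.continuum := by
    clear h1 hcount hinj this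
    simp
  rw [h2] at h1
  exact absurd h1 (not_le.mpr Cardinal.aleph0_lt_continuum)

open Set Filter Topology in
lemma aux_pos {S : Type*} [TopologicalSpace S]
    (m : BoundedContinuousFunction S ℝ →ₗ[ℝ] ℝ) (hm : ∀ f, |m f| ≤ ‖f‖) (hm1 : m 1 = 1)
    (f : BoundedContinuousFunction S ℝ) (hf : ∀ s, 0 ≤ f s) : 0 ≤ m f := by
  have h1 : ‖‖f‖ • (1 : BoundedContinuousFunction S ℝ) - f‖ ≤ ‖f‖ := by
    rw [BoundedContinuousFunction.norm_le (norm_nonneg _)]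
    intro s
    have h2 := f.norm_coe_le_norm s
    rw [Real.norm_eq_abs, abs_of_nonneg (hf s)] at h2
    simp only [BoundedContinuousFunction.coe_sub, BoundedContinuousFunction.coe_smul,
      Pi.sub_apply, BoundedContinuousFunction.coe_one, Pi.one_apply, smul_eq_mul, mul_one]
    rw [Real.norm_eq_abs, abs_le]
    constructor <;> linarith [hf s]
  have h3 := (le_abs_self _).trans ((hm _).trans h1)
  rw [map_sub, map_smul, hm1] at h3
  simp at h3
  linarith

/-- minimal system -/
def AuxMinimal {S X : Type*} [TopologicalSpace X] (a : S → X → X) : Prop :=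
  ∀ T : Set X, IsClosed T → T.Nonempty → (∀ s, ∀ x ∈ T, a s x ∈ T) → T = Set.univ

open Set Filter Topology in
lemma aux_surj {S X : Type*} [Semigroup S] [TopologicalSpace S]
    [TopologicalSpace X] [CompactSpace X] [T2Space X] [Nonempty X]
    (hmulL : ∀ t : S, Continuous fun s => t * s) (hamen : LeftAmenable hmulL)
    (a : S → X → X) (ha : Continuous fun p : S × X => a p.1 p.2)
    (hact : ∀ s t x, a (s * t) x = a s (a t x)) (hmin : AuxMinimal a) (s : S) :
    Function.Surjective (a s) := by
  obtain ⟨m, hm, hm1, hinv⟩ := hamen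
  obtain ⟨x₀⟩ := (inferInstance : Nonempty X)
  have hax : ∀ x, Continuous fun s => a s x := fun x =>
    ha.comp (by fun_prop : Continuous fun s => (s, x))
  have has : ∀ s, Continuous (a s) := fun s => ha.comp (by fun_prop : Continuous fun x => (s, x))
  let o : C(S, X) := ⟨fun t => a t x₀, hax x₀⟩
  let Φ : C(X, ℝ) → BoundedContinuousFunction S ℝ := fun f =>
    (BoundedContinuousFunction.mkOfCompact f).compContinuous o
  have hΦ : ∀ f t, Φ f t = f (a t x₀) := fun f t => rfl
  let tr : S → C(X, ℝ) → C(X, ℝ) := fun s f => f.comp ⟨a s, has s⟩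
  have htr : ∀ s f x, tr s f x = f (a s x) := fun s f x => rfl
  have hltr : ∀ s f, lTrans s (hmulL s) (Φ f) = Φ (tr s f) := by
    intro s f
    ext t
    change f (a (s * t) x₀) = f (a s (a t x₀))
    rw [hact]
  have hΦc : Continuous Φ := by
    have h1 : Continuous fun g : BoundedContinuousFunction X ℝ => g.compContinuous o :=
      BoundedContinuousFunction.continuous_compContinuous o
    have h2 : Continuous (BoundedContinuousFunction.mkOfCompact : C(X, ℝ) → _) :=
      (ContinuousMap.isometryEquivBoundedOfCompact X ℝ).continuous
    exact h1.comp h2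
  have hLUC : ∀ f, IsLUC hmulL (Φ f) := by
    intro f
    unfold IsLUC
    simp_rw [hltr]
    refine hΦc.comp ?_
    exact ContinuousMap.continuous_of_continuous_uncurry _ (f.continuous.comp ha)
  have hMinv : ∀ s f, m (Φ (tr s f)) = m (Φ f) := fun s f => by
    rw [← hltr]; exact hinv s _ (hLUC f)
  have hMpos : ∀ f : C(X, ℝ), (∀ x, 0 ≤ f x) → 0 ≤ m (Φ f) := fun f hf =>
    aux_pos m hm hm1 _ fun t => hf _
  have hMadd : ∀ f g, m (Φ (f + g)) = m (Φ f) + m (Φ g) := fun f g => by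
    rw [← map_add]; rfl
  let T : Set X := {x | ∀ f : C(X, ℝ), (∀ x, 0 ≤ f x) → 0 < f x → 0 < m (Φ f)}
  have hTc : IsClosed T := by
    rw [← isOpen_compl_iff, isOpen_iff_mem_nhds]
    intro x hx
    simp only [T, mem_compl_iff, mem_ofPred_eq, not_forall] at hx
    obtain ⟨f, hf0, hfx, hfm⟩ := hx
    filter_upwards [(isOpen_lt continuous_const f.continuous).mem_nhds hfx] with y hy hyT
    exact hfm (hyT f hf0 hy)
  have hTne : T.Nonempty := by
    by_contra hne
    have hall : ∀ x, ∃ f : C(X, ℝ), (∀ x, 0 ≤ f x) ∧ 0 < f x ∧ m (Φ f) = 0 := by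
      intro x
      have hx : x ∉ T := fun h => hne ⟨x, h⟩
      simp only [T, mem_ofPred_eq, not_forall] at hx
      obtain ⟨f, hf0, hfx, hfm⟩ := hx
      exact ⟨f, hf0, hfx, le_antisymm (not_lt.mp hfm) (hMpos f hf0)⟩
    choose g hg0 hgx hgm using hall
    obtain ⟨F, hF⟩ := isCompact_univ.elim_finite_subcover (fun x => {y | 0 < g x y})
      (fun x => isOpen_lt continuous_const (g x).continuous)
      (fun x _ => mem_iUnion.mpr ⟨x, hgx x⟩)
    have hsum0 : m (Φ (∑ x ∈ F, g x)) = 0 := by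
      clear hF
      classical
      induction F using Finset.induction_on with
      | empty => rw [Finset.sum_empty]; exact map_zero m
      | insert x F hx ih => rw [Finset.sum_insert hx, hMadd, hgm, ih, add_zero]
    have hpos : ∀ y, 0 < (∑ x ∈ F, g x) y := by
      intro y
      rw [ContinuousMap.sum_apply]
      have := hF (mem_univ y)
      simp only [mem_iUnion] at this
      obtain ⟨x, hxF, hxy⟩ := this
      exact Finset.sum_pos' (fun i _ => hg0 i y) ⟨x, hxF, hxy⟩
    generalize (∑ x ∈ F, g x) = G at hsum0 hpos
    obtain ⟨y, _, hy⟩ := isCompact_univ.exists_isMinOn univ_nonempty G.continuous.continuousOn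
    have h5 := aux_pos m hm hm1 (Φ G - G y • 1) (fun t => by
      have : G y ≤ G (a t x₀) := hy (mem_univ _)
      simp only [BoundedContinuousFunction.coe_sub, BoundedContinuousFunction.coe_smul,
        Pi.sub_apply, BoundedContinuousFunction.coe_one, Pi.one_apply, smul_eq_mul, mul_one, hΦ]
      linarith)
    rw [map_sub, map_smul, hm1, hsum0] at h5
    simp at h5
    linarith [hpos y]
  have hTinv : ∀ s, ∀ x ∈ T, a s x ∈ T := by
    intro s x hx f hf0 hfx
    rw [← hMinv s f]
    exact hx _ (fun y => hf0 _) hfx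
  have hTu := hmin T hTc hTne hTinv
  intro x
  by_contra hx
  have hxT : x ∈ T := hTu ▸ mem_univ x
  have hxr : Disjoint (range (a s)) {x} := by
    rw [disjoint_singleton_right]; exact hx
  obtain ⟨f, hf0, hf1, hf2⟩ := exists_continuous_zero_one_of_isClosed
    (isCompact_range (has s)).isClosed isClosed_singleton hxr
  have h1 := hxT f (fun y => (hf2 y).1) (by rw [hf1 rfl]; exact one_pos)
  rw [← hMinv s f] at h1
  have : tr s f = 0 := by
    ext y; exact hf0 ⟨y, rfl⟩
  rw [this] at h1
  have h0 : m (Φ 0) = 0 := map_zero m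
  linarith

lemma aux_ideal_mul {S : Type*} [Semigroup S] (I : Set S) (hI : IsLeftIdeal I) (t : S) :
    IsLeftIdeal ((fun q => q * t) '' I) := by
  refine ⟨hI.1.image _, ?_⟩
  rintro s _ ⟨q, hq, rfl⟩
  exact ⟨s * q, hI.2 s q hq, mul_assoc _ _ _⟩

lemma aux_ideal_closure {S : Type*} [Semigroup S] [TopologicalSpace S]
    (hmulL : ∀ t : S, Continuous fun s => t * s) (I : Set S) (hI : IsLeftIdeal I) :
    IsLeftIdeal (closure I) := by
  refine ⟨hI.1.closure, fun s i hi => ?_⟩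
  exact map_mem_closure (hmulL s) hi (hI.2 s)

lemma aux_ideal_inter {S : Type*} [Semigroup S] [TopologicalSpace S] (hrev : RightReversible S)
    (I J : Set S) (hI : IsLeftIdeal I) (hJ : IsLeftIdeal J) (hIc : IsClosed I) (hJc : IsClosed J) :
    IsLeftIdeal (I ∩ J) :=
  ⟨hrev I J hI hJ hIc hJc, fun s i hi => ⟨hI.2 s i hi.1, hJ.2 s i hi.2⟩⟩

lemma aux_ideal_finset {S ι : Type*} [Semigroup S] [TopologicalSpace S] [Nonempty S]
    (hrev : RightReversible S) (F : Finset ι)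
    (J : ι → Set S) (hJ : ∀ i, IsLeftIdeal (J i)) (hJc : ∀ i, IsClosed (J i)) :
    IsLeftIdeal (⋂ i ∈ F, J i) ∧ IsClosed (⋂ i ∈ F, J i) := by
  classical
  induction F using Finset.induction_on with
  | empty => simp [IsLeftIdeal]
  | insert x F hx ih =>
    rw [Finset.set_biInter_insert]
    exact ⟨aux_ideal_inter hrev _ _ (hJ x) ih.1 (hJc x) ih.2, (hJc x).inter ih.2⟩

open Set Filter Topology in
lemma aux_tb {S X E : Type*} [Semigroup S] [TopologicalSpace S] [Nonempty S]
    [TopologicalSpace X] [CompactSpace X] [T2Space X] [Nonempty X]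
    [NormedAddCommGroup E] [NormedSpace ℝ E]
    (hmulL : ∀ t : S, Continuous fun s => t * s) (hrev : RightReversible S)
    (a : S → X → X) (ha : Continuous fun p : S × X => a p.1 p.2)
    (hact : ∀ s t x, a (s * t) x = a s (a t x)) (hmin : AuxMinimal a)
    (hsurj : ∀ s, Function.Surjective (a s))
    (ι : X → E) (hι : ∀ f : E →L[ℝ] ℝ, Continuous fun z => f (ι z))
    (hne : ∀ x, ∃ I : Set S, IsLeftIdeal I ∧ ∀ s ∈ I, ∀ y, ‖ι (a s x) - ι (a s y)‖ ≤ ‖ι x - ι y‖)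
    (ε : ℝ) (hε : 0 < ε) :
    ∃ F : Finset X, ∀ y, ∃ x ∈ F, ‖ι x - ι y‖ ≤ ε := by
  classical
  have hax : ∀ x, Continuous fun s => a s x := fun x =>
    ha.comp (by fun_prop : Continuous fun s => (s, x))
  have has : ∀ s, Continuous (a s) := fun s => ha.comp (by fun_prop : Continuous fun x => (s, x))
  obtain ⟨U, hUo, ⟨u, hu⟩, hUd⟩ := aux_fragment ι hι (ε / 2) (by linarith)
  have hcov : ∀ x, ∃ s, a s x ∈ U := by
    intro x
    have hd : closure (range fun s => a s x) = univ := by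
      refine hmin _ isClosed_closure (range_nonempty _).closure fun s y hy => ?_
      refine map_mem_closure (has s) hy ?_
      rintro _ ⟨t, rfl⟩
      exact ⟨s * t, hact _ _ _⟩
    have : u ∈ closure (range fun s => a s x) := hd ▸ mem_univ u
    obtain ⟨_, hy, ⟨s, rfl⟩⟩ := mem_closure_iff.mp this U hUo hu
    exact ⟨s, hy⟩
  obtain ⟨G, hG⟩ := isCompact_univ.elim_finite_subcover (fun s => a s ⁻¹' U)
    (fun s => hUo.preimage (has s)) (fun x _ => mem_iUnion.mpr (hcov x))
  obtain ⟨I, hI, hIne⟩ := hne u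
  obtain ⟨⟨⟨t, ht⟩, _⟩, _⟩ := aux_ideal_finset hrev G (fun s => closure ((fun q => q * s) '' I))
    (fun s => aux_ideal_closure hmulL _ (aux_ideal_mul I hI s)) (fun s => isClosed_closure)
  have hsmall : ∀ s ∈ G, ∀ x y, a s x ∈ U → a s y ∈ U → ‖ι (a t x) - ι (a t y)‖ ≤ ε := by
    intro s hs x y hx hy
    have hts := mem_iInter₂.mp ht s hs
    have hcl : IsClosed {r | ‖ι (a r x) - ι (a r y)‖ ≤ ε} :=
      aux_norm_closed (fun r => ι (a r x)) (fun r => ι (a r y))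
        (fun f => (hι f).comp (hax x)) (fun f => (hι f).comp (hax y)) ε
    refine closure_minimal ?_ hcl hts
    rintro _ ⟨q, hq, rfl⟩
    have h1 := (hIne q hq (a s x)).trans (hUd _ hu _ hx)
    have h2 := (hIne q hq (a s y)).trans (hUd _ hu _ hy)
    simp only [mem_ofPred_eq, hact]
    rw [norm_sub_rev] at h1
    have := norm_sub_le_norm_sub_add_norm_sub (ι (a q (a s x))) (ι (a q u)) (ι (a q (a s y)))
    linarith
  let c : S → X := fun s => if h : ∃ x, a s x ∈ U then a t h.choose else u
  refine ⟨G.image c, fun y => ?_⟩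
  obtain ⟨x, rfl⟩ := hsurj t y
  have := hG (mem_univ x)
  simp only [mem_iUnion] at this
  obtain ⟨s, hs, hsx⟩ := this
  refine ⟨c s, Finset.mem_image_of_mem _ hs, ?_⟩
  have hex : ∃ x, a s x ∈ U := ⟨x, hsx⟩
  simp only [c, dif_pos hex]
  exact hsmall s hs _ _ hex.choose_spec hsx

/-- DeMarr's lemma for totally bounded sets. -/
lemma aux_demarr {X E : Type*} [Nonempty X] [NormedAddCommGroup E] [NormedSpace ℝ E] (ι : X → E)
    (htb : ∀ ε : ℝ, 0 < ε → ∃ F : Finset X, ∀ y, ∃ x ∈ F, ‖ι x - ι y‖ ≤ ε)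
    (hns : ∃ x y, ι x ≠ ι y) :
    ∃ u ∈ convexHull ℝ (Set.range ι), ∃ r : ℝ, (∀ y, ‖u - ι y‖ ≤ r) ∧
      ∃ x y, r < ‖ι x - ι y‖ := by
  classical
  have hb : Bornology.IsBounded (Set.range ι) := by
    obtain ⟨F, hF⟩ := htb 1 one_pos
    have h1 : Bornology.IsBounded (⋃ x ∈ F, Metric.closedBall (ι x) 1) :=
      (Bornology.isBounded_biUnion_finset F).mpr fun x _ => Metric.isBounded_closedBall
    refine h1.subset ?_
    rintro _ ⟨y, rfl⟩
    obtain ⟨x, hx, hxy⟩ := hF y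
    exact Set.mem_biUnion hx (by rw [Metric.mem_closedBall, dist_comm, dist_eq_norm]; exact hxy)
  set d := Metric.diam (Set.range ι) with hd
  have hle : ∀ x y, ‖ι x - ι y‖ ≤ d := fun x y => by
    rw [← dist_eq_norm]; exact Metric.dist_le_diam_of_mem hb ⟨x, rfl⟩ ⟨y, rfl⟩
  have hd0 : 0 < d := by
    obtain ⟨x, y, hxy⟩ := hns
    exact lt_of_lt_of_le (norm_pos_iff.mpr (sub_ne_zero.mpr hxy)) (hle x y)
  obtain ⟨F, hF⟩ := htb (d / 2) (by linarith)
  have hFne : F.Nonempty := by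
    obtain ⟨x⟩ := (inferInstance : Nonempty X)
    obtain ⟨z, hz, _⟩ := hF x
    exact ⟨z, hz⟩
  have hn : (0 : ℝ) < F.card := by exact_mod_cast hFne.card_pos
  refine ⟨∑ x ∈ F, (F.card : ℝ)⁻¹ • ι x, ?_, d - d / (2 * F.card), ?_, ?_⟩
  · refine (convex_convexHull ℝ _).sum_mem (fun _ _ => by positivity) ?_
      (fun x _ => subset_convexHull ℝ _ ⟨x, rfl⟩)
    rw [Finset.sum_const, nsmul_eq_mul]; field_simp
  · intro y
    obtain ⟨z, hz, hzy⟩ := hF y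
    have h1 : (∑ x ∈ F, (F.card : ℝ)⁻¹ • ι x) - ι y = (F.card : ℝ)⁻¹ • ∑ x ∈ F, (ι x - ι y) := by
      rw [Finset.sum_sub_distrib, Finset.sum_const, smul_sub, Finset.smul_sum,
        ← Nat.cast_smul_eq_nsmul ℝ, smul_smul, inv_mul_cancel₀ hn.ne', one_smul]
    have h2 : ‖∑ x ∈ F, (ι x - ι y)‖ ≤ F.card * d - d / 2 := by
      refine (norm_sum_le _ _).trans ?_
      rw [← Finset.add_sum_erase F _ hz]
      have h3 : ∑ x ∈ F.erase z, ‖ι x - ι y‖ ≤ ∑ x ∈ F.erase z, d :=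
        Finset.sum_le_sum fun x _ => hle x y
      rw [Finset.sum_const, nsmul_eq_mul, Finset.card_erase_of_mem hz,
        Nat.cast_sub hFne.card_pos] at h3
      push_cast at h3
      linarith
    rw [h1, norm_smul, norm_inv, Real.norm_of_nonneg hn.le]
    calc (F.card : ℝ)⁻¹ * ‖∑ x ∈ F, (ι x - ι y)‖ ≤ (F.card : ℝ)⁻¹ * (F.card * d - d / 2) := by gcongr
      _ = d - d / (2 * F.card) := by field_simp
  · by_contra hcon
    push Not at hcon
    have h5 : 0 < d / (2 * F.card) := by positivity
    have hr0 : 0 ≤ d - d / (2 * F.card) := by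
      obtain ⟨x⟩ := (inferInstance : Nonempty X)
      exact (norm_nonneg _).trans (hcon x x)
    have : d ≤ d - d / (2 * F.card) := by
      refine Metric.diam_le_of_forall_dist_le hr0 ?_
      rintro _ ⟨x, rfl⟩ _ ⟨y, rfl⟩
      rw [dist_eq_norm]; exact hcon x y
    linarith

open Set in
/-- Zorn for closed subsets of a compact space. -/
lemma aux_zorn {X : Type*} [TopologicalSpace X] [CompactSpace X] (P : Set X → Prop)
    (hP : ∀ c : Set (Set X), c.Nonempty → IsChain (· ⊆ ·) c → (∀ A ∈ c, P A) → P (⋂₀ c))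
    (A : Set X) (hA : IsClosed A) (hAne : A.Nonempty) (hPA : P A) :
    ∃ B ⊆ A, IsClosed B ∧ B.Nonempty ∧ P B ∧
      ∀ C ⊆ B, IsClosed C → C.Nonempty → P C → C = B := by
  obtain ⟨B, hBA, hB⟩ := zorn_superset_nonempty {B : Set X | IsClosed B ∧ B.Nonempty ∧ P B}
    (fun c hc hchain hcne => by
      refine ⟨⋂₀ c, ⟨isClosed_sInter fun A hA => (hc hA).1, ?_,
        hP c hcne hchain fun A hA => (hc hA).2.2⟩, fun s hs => sInter_subset_of_mem hs⟩
      have := hcne.to_subtype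
      refine IsCompact.nonempty_sInter_of_directed_nonempty_isCompact_isClosed ?_
        (fun A hA => (hc hA).2.1) (fun A hA => (hc hA).1.isCompact) (fun A hA => (hc hA).1)
      intro A hA B hB
      rcases hchain.total hA hB with h | h
      · exact ⟨A, hA, subset_rfl, h⟩
      · exact ⟨B, hB, h, subset_rfl⟩)
    A ⟨hA, hAne, hPA⟩
  refine ⟨B, hBA, hB.prop.1, hB.prop.2.1, hB.prop.2.2, fun C hCB h1 h2 h3 => ?_⟩
  exact subset_antisymm hCB (hB.le_of_le ⟨h1, h2, h3⟩ hCB)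

open Set Filter Topology in
lemma aux_main {S X E : Type*} [Semigroup S] [TopologicalSpace S] [Nonempty S]
    [TopologicalSpace X] [CompactSpace X] [T2Space X] [Nonempty X]
    [NormedAddCommGroup E] [NormedSpace ℝ E]
    (hmulL : ∀ t : S, Continuous fun s => t * s) (hrev : RightReversible S)
    (hamen : LeftAmenable hmulL)
    (a : S → X → X) (ha : Continuous fun p : S × X => a p.1 p.2)
    (hact : ∀ s t x, a (s * t) x = a s (a t x))
    (ι : X → E) (hinj : Function.Injective ι)
    (hι : ∀ f : E →L[ℝ] ℝ, Continuous fun z => f (ι z))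
    (hconv : Convex ℝ (range ι))
    (hne : ∀ x, ∃ I : Set S, IsLeftIdeal I ∧ ∀ s ∈ I, ∀ y, ‖ι (a s x) - ι (a s y)‖ ≤ ‖ι x - ι y‖) :
    ∃ x, ∀ s, a s x = x := by
  have hax : ∀ x, Continuous fun s => a s x := fun x =>
    ha.comp (by fun_prop : Continuous fun s => (s, x))
  have has : ∀ s, Continuous (a s) := fun s => ha.comp (by fun_prop : Continuous fun x => (s, x))
  let Id := {J : Set S // IsLeftIdeal J ∧ IsClosed J}
  let L : X → Set X := fun x => ⋂ J : Id, closure ((fun s => a s x) '' J.1)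
  have hLc : ∀ x, IsClosed (L x) := fun x => isClosed_iInter fun _ => isClosed_closure
  have hLne : ∀ x, (L x).Nonempty := by
    intro x
    have : Nonempty Id := ⟨⟨univ, ⟨univ_nonempty, fun _ _ _ => mem_univ _⟩, isClosed_univ⟩⟩
    refine IsCompact.nonempty_iInter_of_directed_nonempty_isCompact_isClosed _ ?_
      (fun J => (J.2.1.1.image _).closure) (fun J => isClosed_closure.isCompact)
      (fun J => isClosed_closure)
    intro I J
    exact ⟨⟨I.1 ∩ J.1, aux_ideal_inter hrev _ _ I.2.1 J.2.1 I.2.2 J.2.2, I.2.2.inter J.2.2⟩,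
      closure_mono (image_mono inter_subset_left), closure_mono (image_mono inter_subset_right)⟩
  have hLinv : ∀ x s, ∀ y ∈ L x, a s y ∈ L x := by
    intro x s y hy
    refine mem_iInter.mpr fun J => ?_
    refine map_mem_closure (has s) (mem_iInter.mp hy J) ?_
    rintro _ ⟨t, ht, rfl⟩
    exact ⟨s * t, J.2.1.2 s t ht, hact _ _ _⟩
  have hLsub : ∀ x (I : Set S) (B : Set X), IsLeftIdeal I → IsClosed B → (∀ s ∈ I, a s x ∈ B) →
      L x ⊆ B := by
    intro x I B hI hB h y hy
    have h1 := mem_iInter.mp hy ⟨closure I, aux_ideal_closure hmulL I hI, isClosed_closure⟩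
    refine closure_minimal ?_ hB h1
    rintro _ ⟨s, hs, rfl⟩
    exact closure_minimal (t := {s | a s x ∈ B}) h (hB.preimage (hax x)) hs
  obtain ⟨C, -, hCc, ⟨x₀, hx₀⟩, ⟨hCconv, hCL⟩, hCmin⟩ := aux_zorn
    (fun C : Set X => Convex ℝ (ι '' C) ∧ ∀ x ∈ C, L x ⊆ C)
    (by
      intro c hcne _ hc
      refine ⟨?_, fun x hx => subset_sInter fun A hA => (hc A hA).2 x (hx A hA)⟩
      rw [sInter_eq_biInter, hinj.injOn.image_biInter_eq hcne]
      exact convex_iInter₂ fun A hA => (hc A hA).1)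
    univ isClosed_univ univ_nonempty ⟨by rwa [image_univ], fun _ _ => subset_univ _⟩
  obtain ⟨F, hFL, hFc, hFne, hFinv, hFmin⟩ := aux_zorn
    (fun F : Set X => ∀ s, ∀ x ∈ F, a s x ∈ F)
    (fun c _ _ hc s x hx A hA => hc A hA s x (hx A hA))
    (L x₀) (hLc x₀) (hLne x₀) (hLinv x₀)
  have hFC : F ⊆ C := hFL.trans (hCL x₀ hx₀)
  have : CompactSpace F := isCompact_iff_compactSpace.mp hFc.isCompact
  have : Nonempty F := hFne.to_subtype
  let b : S → F → F := fun s x => ⟨a s x, hFinv s x x.2⟩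
  have hb : Continuous fun p : S × F => b p.1 p.2 :=
    Continuous.subtype_mk (ha.comp (by fun_prop : Continuous fun p : S × F => (p.1, (p.2 : X)))) _
  have hbact : ∀ s t x, b (s * t) x = b s (b t x) := fun s t x => Subtype.ext (hact s t x)
  have hbmin : AuxMinimal b := by
    intro T hT hTne hTinv
    have h1 : Subtype.val '' T = F := by
      refine hFmin _ (by simp) (hFc.isClosedEmbedding_subtypeVal.isClosedMap T hT) (hTne.image _) ?_
      rintro s _ ⟨x, hx, rfl⟩
      exact ⟨b s x, hTinv s x hx, rfl⟩
    refine eq_univ_of_forall fun x => ?_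
    have h2 : (x : X) ∈ Subtype.val '' T := by rw [h1]; exact x.2
    obtain ⟨y, hy, hyx⟩ := h2
    rwa [← Subtype.ext hyx]
  have hsurj := aux_surj hmulL hamen b hb hbact hbmin
  let κ : F → E := fun x => ι x
  have hκ : ∀ f : E →L[ℝ] ℝ, Continuous fun z => f (κ z) :=
    fun f => (hι f).comp continuous_subtype_val
  have htb := aux_tb hmulL hrev b hb hbact hbmin hsurj κ hκ (fun x => by
    obtain ⟨I, hI, h⟩ := hne x
    exact ⟨I, hI, fun s hs y => h s hs y⟩)
  by_cases hns : ∃ x y, κ x ≠ κ y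
  · exfalso
    obtain ⟨u, hu, r, hur, p, q, hpq⟩ := aux_demarr κ htb hns
    have hB : IsClosed {x : X | ∀ y : F, ‖ι x - ι y‖ ≤ r} := by
      rw [ofPred_forall]
      exact isClosed_iInter fun y => aux_norm_closed ι (fun _ => ι y) hι
        (fun f => continuous_const) r
    have huC : u ∈ ι '' C := by
      refine convexHull_min ?_ hCconv hu
      rintro _ ⟨x, rfl⟩
      exact ⟨x, hFC x.2, rfl⟩
    obtain ⟨v, hvC, rfl⟩ := huC
    have hK1 := hCmin (C ∩ {x : X | ∀ y : F, ‖ι x - ι y‖ ≤ r}) inter_subset_left (hCc.inter hB)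
      ⟨v, hvC, hur⟩ ⟨by
        have : ι '' (C ∩ {x : X | ∀ y : F, ‖ι x - ι y‖ ≤ r}) =
            ι '' C ∩ ⋂ y : F, Metric.closedBall (ι y) r := by
          ext w
          constructor
          · rintro ⟨x, ⟨hx, hxr⟩, rfl⟩
            exact ⟨⟨x, hx, rfl⟩, mem_iInter.mpr fun y => by
              rw [Metric.mem_closedBall, dist_eq_norm]; exact hxr y⟩
          · rintro ⟨⟨x, hx, rfl⟩, hxr⟩
            refine ⟨x, ⟨hx, fun y => ?_⟩, rfl⟩
            have := mem_iInter.mp hxr y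
            rwa [Metric.mem_closedBall, dist_eq_norm] at this
        rw [this]
        exact hCconv.inter (convex_iInter fun y => convex_closedBall _ _), by
        rintro x ⟨hxC, hxr⟩
        obtain ⟨I, hI, h⟩ := hne x
        refine subset_inter (hCL x hxC) (hLsub x I _ hI hB ?_)
        intro s hs y
        obtain ⟨y', rfl⟩ := hsurj s y
        exact (h s hs y').trans (hxr y')⟩
    have hpC : (p : X) ∈ C := hFC p.2
    rw [← hK1] at hpC
    exact absurd (hpC.2 q) (not_le.mpr hpq)
  · push Not at hns
    obtain ⟨x, hx⟩ := hFne
    exact ⟨x, fun s => hinj (hns ⟨a s x, hFinv s x hx⟩ ⟨x, hx⟩)⟩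

/-- let `S` be a right reversible and left amenable semitopological
semigroup and `K` a nonempty weakly compact convex subset of a Banach space.  Every
jointly weakly continuous, super asymptotically nonexpansive action of `S` on `K` has a
common fixed point. -/
theorem common_fixed_point_weakly_compact
    {S E : Type*} [Semigroup S] [TopologicalSpace S] [T2Space S]
    [NormedAddCommGroup E] [NormedSpace ℝ E] [CompleteSpace E]
    -- `S` is a semitopological semigroup: multiplication is separately continuous
    (hmulL : ∀ t : S, Continuous fun s => t * s)
    (hmulR : ∀ t : S, Continuous fun s => s * t)
    (hrev : RightReversible S)
    (hamen : LeftAmenable hmulL)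
    (K : Set E) (hKne : K.Nonempty) (hKconv : Convex ℝ K)
    -- `K` is weakly compact
    (hKcomp : IsCompact (toWeakSpace ℝ E '' K))
    (act : S → E → E) (hmaps : ∀ s : S, Set.MapsTo (act s) K K)
    (haction : ∀ s t : S, ∀ x ∈ K, act (s * t) x = act s (act t x))
    -- the action is jointly weakly continuous
    (hjoint : ContinuousOn
      (fun p : S × WeakSpace ℝ E => toWeakSpace ℝ E (act p.1 ((toWeakSpace ℝ E).symm p.2)))
      (Set.univ ×ˢ (toWeakSpace ℝ E '' K)))
    (hsan : SuperAsympNonexpansive act K) :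
    ∃ x₀ ∈ K, ∀ s : S, act s x₀ = x₀ := by
  classical
  rcases isEmpty_or_nonempty S with hS | hS
  · obtain ⟨x, hx⟩ := hKne
    exact ⟨x, hx, fun s => hS.elim s⟩
  let X := ↥(toWeakSpace ℝ E '' K)
  have hcX : CompactSpace X := isCompact_iff_compactSpace.mp hKcomp
  have hnX : Nonempty X := (hKne.image _).to_subtype
  let ι : X → E := fun x => (toWeakSpace ℝ E).symm x.1
  have hιK : ∀ x, ι x ∈ K := by
    rintro ⟨_, y, hy, rfl⟩
    simpa [ι] using hy
  let a : S → X → X := fun s x => ⟨toWeakSpace ℝ E (act s (ι x)), _, hmaps s (hιK x), rfl⟩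
  have hιa : ∀ s x, ι (a s x) = act s (ι x) := fun s x => by simp [ι, a]
  have hinj : Function.Injective ι := fun x y h =>
    Subtype.ext ((toWeakSpace ℝ E).symm.injective h)
  have hrange : Set.range ι = K := by
    ext y
    constructor
    · rintro ⟨x, rfl⟩; exact hιK x
    · intro hy; exact ⟨⟨_, y, hy, rfl⟩, by simp [ι]⟩
  have ha : Continuous fun p : S × X => a p.1 p.2 := by
    refine Continuous.subtype_mk ?_ _
    exact hjoint.comp_continuous
      (continuous_fst.prodMk (continuous_subtype_val.comp continuous_snd) : Continuous fun p : S × X => (p.1, p.2.val))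
      (fun p => ⟨Set.mem_univ _, p.2.property⟩)
  have hι : ∀ f : E →L[ℝ] ℝ, Continuous fun z => f (ι z) := fun f =>
    (WeakBilin.eval_continuous (topDualPairing ℝ E).flip f).comp continuous_subtype_val
  obtain ⟨x, hx⟩ := aux_main hmulL hrev hamen a ha
    (fun s t x => hinj (by rw [hιa, hιa, hιa, haction s t _ (hιK x)])) ι hinj hι
    (by rwa [hrange]) (fun x => by
      obtain ⟨t⟩ := hS
      obtain ⟨I, hI, _, h⟩ := hsan (ι x) (hιK x) t
      exact ⟨I, hI, fun s hs y => by rw [hιa, hιa]; exact h s hs _ (hιK y)⟩)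
  exact ⟨ι x, hιK x, fun s => by rw [← hιa, hx s]⟩
end

section
/- Let S be a separable and reversible semitopological semigroup and K a weakly compact convex subset of a Banach space. Then every separately weakly continuous and super asymptotically nonexpansive action of S on K has a common fixed point. -/
/-- A (nonempty) right ideal of a semigroup `S`: `I ≠ ∅` and `I * S ⊆ I`. -/
def IsRightIdeal {S : Type*} [Semigroup S] (I : Set S) : Prop :=
  I.Nonempty ∧ ∀ i ∈ I, ∀ s : S, i * s ∈ I

/-- `S` is left reversible: any two closed right ideals of `S` intersect. -/
def LeftReversible (S : Type*) [Semigroup S] [TopologicalSpace S] : Prop :=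
  ∀ I J : Set S, IsRightIdeal I → IsRightIdeal J → IsClosed I → IsClosed J → (I ∩ J).Nonempty

open Filter Topology Set

section Core

structure FPSys {S W : Type*} [Semigroup S] [TopologicalSpace S]
    [AddCommGroup W] [Module ℝ W] [TopologicalSpace W]
    (act : S → W → W) (K : Set W) (N : Seminorm ℝ W) : Prop where
  mulL : ∀ t : S, Continuous fun s => t * s
  mulR : ∀ t : S, Continuous fun s => s * t
  lrev : LeftReversible S
  rrev : RightReversible S
  ne : K.Nonempty
  conv : Convex ℝ K
  comp : IsCompact K
  maps : ∀ s : S, ∀ x ∈ K, act s x ∈ K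
  action : ∀ s t : S, ∀ x ∈ K, act (s * t) x = act s (act t x)
  contS : ∀ x ∈ K, Continuous fun s : S => act s x
  contK : ∀ s : S, ContinuousOn (act s) K
  san : ∀ x ∈ K, ∃ I : Set S, IsLeftIdeal I ∧ ∀ s ∈ I, ∀ y ∈ K, N (act s x - act s y) ≤ N (x - y)
  ball : ∀ r : ℝ, IsClosed {x | N x ≤ r}
  clos : ∀ (A : Set W) (y : W), (∀ ε > 0, ∃ b ∈ A, N (y - b) ≤ ε) → y ∈ closure A
  sep : ∀ D : Set W, D.Countable → ∀ ε > 0, ∃ c : ℕ → W, ∀ y ∈ closure D, ∃ n, N (y - c n) ≤ ε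

variable {S W : Type*} [Semigroup S] [TopologicalSpace S]
    [AddCommGroup W] [Module ℝ W] [TopologicalSpace W]
    {act : S → W → W} {K : Set W} {N : Seminorm ℝ W}

theorem closure_left (hm : ∀ t : S, Continuous fun s => t * s) {I : Set S} (hI : IsLeftIdeal I) :
    IsLeftIdeal (closure I) := by
  refine ⟨hI.1.closure, fun s i hi => ?_⟩
  exact map_mem_closure (hm s) hi (fun a ha => hI.2 s a ha)

theorem closure_right (hm : ∀ t : S, Continuous fun s => s * t) {I : Set S}
    (hI : IsRightIdeal I) : IsRightIdeal (closure I) := by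
  refine ⟨hI.1.closure, fun i hi s => ?_⟩
  exact map_mem_closure (f := fun a => a * s) (hm s) hi (fun a ha => hI.2 a ha s)

theorem exists_uf [Nonempty S] (hl : LeftReversible S) (hr : RightReversible S) :
    ∃ U : Ultrafilter S, (∀ I, IsLeftIdeal I → IsClosed I → I ∈ U) ∧
      (∀ I, IsRightIdeal I → IsClosed I → I ∈ U) := by
  have huL : IsLeftIdeal (univ : Set S) := ⟨univ_nonempty, fun _ _ _ => mem_univ _⟩
  have huR : IsRightIdeal (univ : Set S) := ⟨univ_nonempty, fun _ _ _ => mem_univ _⟩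
  let B : FilterBasis S :=
    { sets := {A | ∃ I J, IsLeftIdeal I ∧ IsClosed I ∧ IsRightIdeal J ∧ IsClosed J ∧ A = I ∩ J}
      nonempty := ⟨_, univ, univ, huL, isClosed_univ, huR, isClosed_univ, rfl⟩
      inter_sets := by
        rintro x y ⟨I, J, hI, hI', hJ, hJ', rfl⟩ ⟨I2, J2, hI2, hI2', hJ2, hJ2', rfl⟩
        refine ⟨_, ⟨I ∩ I2, J ∩ J2, ⟨hr _ _ hI hI2 hI' hI2', ?_⟩, hI'.inter hI2',
          ⟨hl _ _ hJ hJ2 hJ' hJ2', ?_⟩, hJ'.inter hJ2', rfl⟩, ?_⟩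
        · exact fun s i hi => ⟨hI.2 s i hi.1, hI2.2 s i hi.2⟩
        · exact fun i hi s => ⟨hJ.2 i hi.1 s, hJ2.2 i hi.2 s⟩
        · rintro a ⟨⟨h1, h2⟩, h3, h4⟩
          exact ⟨⟨h1, h3⟩, h2, h4⟩ }
  have hne : B.filter.NeBot := by
    rw [B.hasBasis.neBot_iff]
    rintro A ⟨I, J, hI, hI', hJ, hJ', rfl⟩
    obtain ⟨i, hi⟩ := hI.1
    obtain ⟨j, hj⟩ := hJ.1
    exact ⟨j * i, hI.2 _ _ hi, hJ.2 _ hj _⟩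
  refine ⟨Ultrafilter.of B.filter, fun I hI hI' => ?_, fun I hI hI' => ?_⟩
  · apply Ultrafilter.of_le B.filter
    exact B.hasBasis.mem_of_superset (i := I ∩ univ)
      ⟨I, univ, hI, hI', huR, isClosed_univ, rfl⟩ inter_subset_left
  · apply Ultrafilter.of_le B.filter
    exact B.hasBasis.mem_of_superset (i := univ ∩ I)
      ⟨univ, I, huL, isClosed_univ, hI, hI', rfl⟩ inter_subset_right

namespace FPSys

theorem lim_le [IsTopologicalAddGroup W] (h : FPSys act K N) {ι : Type*} {l : Filter ι} [l.NeBot]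
    {f g : ι → W} {a b : W} {r : ℝ} (hf : Tendsto f l (𝓝 a)) (hg : Tendsto g l (𝓝 b))
    (hr : ∀ᶠ i in l, N (f i - g i) ≤ r) : N (a - b) ≤ r :=
  (h.ball r).mem_of_tendsto (hf.sub hg) hr

theorem ball' [IsTopologicalAddGroup W] (h : FPSys act K N) (c : W) (r : ℝ) :
    IsClosed {x | N (x - c) ≤ r} :=
  (h.ball r).preimage (continuous_id.sub continuous_const)

theorem ball'' [IsTopologicalAddGroup W] (h : FPSys act K N) (c : W) (r : ℝ) :
    IsClosed {x | N (c - x) ≤ r} :=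
  (h.ball r).preimage (continuous_const.sub continuous_id)

/-- closed version of the ideals -/
theorem san' [IsTopologicalAddGroup W] (h : FPSys act K N) {x : W} (hx : x ∈ K) :
    ∃ I : Set S, IsLeftIdeal I ∧ IsClosed I ∧
      ∀ s ∈ I, ∀ y ∈ K, N (act s x - act s y) ≤ N (x - y) := by
  obtain ⟨I, hI, h2⟩ := h.san x hx
  refine ⟨closure I, closure_left h.mulL hI, isClosed_closure, fun s hs y hy => ?_⟩
  have : IsClosed {s : S | N (act s x - act s y) ≤ N (x - y)} :=
    (h.ball _).preimage ((h.contS x hx).sub (h.contS y hy))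
  exact closure_minimal (fun a ha => h2 a ha y hy) this hs

theorem small_open [IsTopologicalAddGroup W] [T2Space W] (h : FPSys act K N) {F : Set W}
    (hF : IsCompact F) (hne : F.Nonempty) {ε : ℝ} (c : ℕ → W)
    (hc : ∀ y ∈ F, ∃ n, N (y - c n) ≤ ε) :
    ∃ V : Set W, IsOpen V ∧ (V ∩ F).Nonempty ∧ ∀ x ∈ V ∩ F, ∀ y ∈ V ∩ F, N (x - y) ≤ 2 * ε := by
  have : CompactSpace F := isCompact_iff_compactSpace.1 hF
  have : Nonempty F := hne.to_subtype
  obtain ⟨n, z, hz⟩ := nonempty_interior_of_iUnion_of_closed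
    (f := fun n => (Subtype.val ⁻¹' {x | N (x - c n) ≤ ε} : Set F))
    (fun n => (h.ball' (c n) ε).preimage continuous_subtype_val) (by
      ext ⟨y, hy⟩
      simpa using hc y hy)
  obtain ⟨O, hO, hO', hzO⟩ := mem_interior.1 hz
  obtain ⟨V, hV, rfl⟩ := isOpen_induced_iff.1 hO'
  refine ⟨V, hV, ⟨z, hzO, z.2⟩, fun x hx y hy => ?_⟩
  have h1 : N (x - c n) ≤ ε := hO (show (⟨x, hx.2⟩ : F) ∈ _ from hx.1)
  have h2 : N (y - c n) ≤ ε := hO (show (⟨y, hy.2⟩ : F) ∈ _ from hy.1)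
  have h3 := map_sub_le_add N (x - c n) (y - c n)
  rw [sub_sub_sub_cancel_right] at h3
  linarith

theorem cover [IsTopologicalAddGroup W] [T2Space W] [TopologicalSpace.SeparableSpace S] [Nonempty S]
    (h : FPSys act K N) {F : Set W} (hFK : F ⊆ K) (hFc : IsClosed F) (hne : F.Nonempty)
    (hinv : ∀ s : S, ∀ x ∈ F, act s x ∈ F)
    (hmin : ∀ y ∈ F, F ⊆ closure (range fun s => act s y)) {ε : ℝ} (hε : 0 < ε) :
    ∃ v : S, ∃ Q : Finset W, (Q : Set W) ⊆ F ∧ ∀ y ∈ F, ∃ q ∈ Q, N (act v y - q) ≤ ε := by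
  classical
  have hFcomp : IsCompact F := h.comp.of_isClosed_subset hFc hFK
  obtain ⟨y0, hy0⟩ := id hne
  -- norm separability
  obtain ⟨D, hD, hDd⟩ := TopologicalSpace.exists_countable_dense S
  obtain ⟨c, hc⟩ := h.sep ((fun s => act s y0) '' D) (hD.image _) (ε / 2) (by positivity)
  have hc' : ∀ y ∈ F, ∃ n, N (y - c n) ≤ ε / 2 := by
    intro y hy
    apply hc
    have h1 := hmin y0 hy0 hy
    refine closure_minimal ?_ isClosed_closure h1
    rintro _ ⟨s, rfl⟩
    exact map_mem_closure (f := fun s => act s y0) (h.contS y0 (hFK hy0)) (hDd s) (fun a ha => ⟨a, ha, rfl⟩)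
  obtain ⟨V, hV, ⟨p, hpV, hpF⟩, hVs⟩ := h.small_open hFcomp hne c hc'
  -- finite cover
  have hopen : ∀ s : S, ∃ O : Set W, IsOpen O ∧ ∀ y ∈ F, (y ∈ O ↔ act s y ∈ V) := by
    intro s
    obtain ⟨O, hO, hO2⟩ := (continuousOn_iff'.1 ((h.contK s).mono hFK)) V hV
    refine ⟨O, hO, fun y hy => ?_⟩
    have : y ∈ act s ⁻¹' V ∩ F ↔ y ∈ O ∩ F := by rw [hO2]
    simpa [hy] using this.symm
  choose O hO hO2 using hopen
  obtain ⟨T, hT⟩ := hFcomp.elim_finite_subcover O hO (by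
    intro y hy
    have h1 := hmin y hy hpF
    obtain ⟨_, hz, s, rfl⟩ := mem_closure_iff.1 h1 V hV hpV
    exact mem_iUnion.2 ⟨s, (hO2 s y hy).2 hz⟩)
  obtain ⟨I, hI, hIle⟩ := h.san p (hFK hpF)
  obtain ⟨U, hUL, -⟩ := exists_uf h.lrev h.rrev
  have hid : ∀ s : S, closure ((fun a => a * s) '' I) ∈ U := by
    intro s
    refine hUL _ (closure_left h.mulL ⟨hI.1.image _, ?_⟩) isClosed_closure
    rintro b _ ⟨i, hi, rfl⟩
    exact ⟨b * i, hI.2 b i hi, mul_assoc _ _ _⟩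
  have hall : ∀ᶠ v in (U : Filter S), ∀ s ∈ T, v ∈ closure ((fun a => a * s) '' I) :=
    (Filter.eventually_all_finset T).2 fun s _ => hid s
  obtain ⟨v, hv⟩ := hall.exists
  have hq : ∀ s ∈ T, ∃ q ∈ F, ∀ y ∈ F, act s y ∈ V → N (act v y - q) ≤ ε := by
    intro s hs
    have h1 := hv s hs
    have hne1 : (comap (fun a => a * s) (𝓝 v) ⊓ 𝓟 I).NeBot := by
      rw [← Filter.frequently_mem_iff_neBot]
      rw [mem_closure_iff_frequently] at h1
      rw [Filter.frequently_comap]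
      refine h1.mono ?_
      rintro _ ⟨a, ha, rfl⟩
      exact ⟨a, rfl, ha⟩
    set G := Ultrafilter.of (comap (fun a => a * s) (𝓝 v) ⊓ 𝓟 I) with hG
    have hGle : (G : Filter S) ≤ comap (fun a => a * s) (𝓝 v) ⊓ 𝓟 I := Ultrafilter.of_le _
    have hGI : ∀ᶠ a in (G : Filter S), a ∈ I := hGle (mem_inf_of_right (mem_principal_self I))
    have hGt : Tendsto (fun a => a * s) (G : Filter S) (𝓝 v) :=
      tendsto_iff_comap.2 (hGle.trans inf_le_left)
    obtain ⟨q, hqF, hq⟩ := hFcomp.ultrafilter_le_nhds' (G.map fun a => act a p)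
      (Filter.Eventually.of_forall (f := (G : Filter S)) fun a => hinv a p hpF)
    refine ⟨q, hqF, fun y hy hyV => ?_⟩
    have t1 : Tendsto (fun a => act (a * s) y) (G : Filter S) (𝓝 (act v y)) :=
      ((h.contS y (hFK hy)).tendsto v).comp hGt
    refine h.lim_le t1 (show Tendsto (fun a => act a p) (G : Filter S) (𝓝 q) from hq) ?_
    filter_upwards [hGI] with a ha
    rw [h.action _ _ _ (hFK hy), map_sub_rev]
    refine (hIle a ha _ (hFK (hinv s y hy))).trans ?_
    refine (hVs _ ⟨hpV, hpF⟩ _ ⟨hyV, hinv s y hy⟩).trans ?_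
    linarith
  choose! q hqF hq using hq
  refine ⟨v, T.image q, ?_, fun y hy => ?_⟩
  · intro z hz
    obtain ⟨s, hs, rfl⟩ := Finset.mem_image.1 (Finset.mem_coe.1 hz)
    exact hqF s hs
  · obtain ⟨s, hs, hys⟩ := mem_iUnion₂.1 (hT hy)
    exact ⟨q s, Finset.mem_image_of_mem _ hs, hq s hs y hy ((hO2 s y hy).1 hys)⟩

theorem exists_C [IsTopologicalAddGroup W] [T2Space W] [TopologicalSpace.SeparableSpace S]
    [Nonempty S]
    (h : FPSys act K N) {F : Set W} (hFK : F ⊆ K) (hFc : IsClosed F) (hne : F.Nonempty)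
    (hinv : ∀ s : S, ∀ x ∈ F, act s x ∈ F)
    (hmin : ∀ y ∈ F, F ⊆ closure (range fun s => act s y)) :
    ∃ C ⊆ F, C.Nonempty ∧ (∀ s : S, C ⊆ act s '' C) ∧
      ∀ ε > 0, ∃ Q : Finset W, ∀ y ∈ C, ∃ q ∈ Q, N (y - q) ≤ ε := by
  classical
  have hFcomp : IsCompact F := h.comp.of_isClosed_subset hFc hFK
  obtain ⟨U, hUL, hUR⟩ := exists_uf h.lrev h.rrev
  have hw : ∀ x ∈ F, ∃ y ∈ F, Tendsto (fun s => act s x) (U : Filter S) (𝓝 y) := fun x hx =>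
    hFcomp.ultrafilter_le_nhds' (U.map fun a => act a x)
      (Filter.Eventually.of_forall (f := (U : Filter S)) fun a => hinv a x hx)
  choose! w hwF hw using hw
  -- images
  have himgc : ∀ (a : S) (C : Set W), C ⊆ F → IsClosed C → IsClosed (act a '' C) := by
    intro a C hC hC'
    exact ((hFcomp.of_isClosed_subset hC' hC).image_of_continuousOn
      ((h.contK a).mono (hC.trans hFK))).isClosed
  have hsub : ∀ a : S, w '' F ⊆ act a '' F := by
    rintro a _ ⟨x, hx, rfl⟩
    refine (himgc a F Subset.rfl hFc).mem_of_tendsto (hw x hx) ?_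
    have hR : closure (range fun b => a * b) ∈ U := by
      refine hUR _ (closure_right h.mulR ⟨range_nonempty _, ?_⟩) isClosed_closure
      rintro _ ⟨b, rfl⟩ s
      exact ⟨b * s, (mul_assoc _ _ _).symm⟩
    filter_upwards [hR] with u hu
    refine closure_minimal ?_ ((himgc a F Subset.rfl hFc).preimage (h.contS x (hFK hx))) hu
    rintro _ ⟨b, rfl⟩
    exact ⟨act b x, hinv b x hx, (h.action a b x (hFK hx)).symm⟩
  have hCF : closure (w '' F) ⊆ F := closure_minimal (by
    rintro _ ⟨x, hx, rfl⟩; exact hwF x hx) hFc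
  refine ⟨closure (w '' F), hCF, (hne.image w).closure, fun s => ?_, fun ε hε => ?_⟩
  · have hcl := himgc s _ hCF isClosed_closure
    refine closure_minimal ?_ hcl
    intro y hy
    have : y ∈ closure (act s '' (w '' F)) := by
      apply h.clos
      intro ε hε
      obtain ⟨v, Q, hQF, hQ⟩ := h.cover hFK hFc hne hinv hmin hε
      have h1 : ∀ u : S, ∃ q ∈ Q, ∃ z ∈ F, y = act (s * u) z ∧ N (z - q) ≤ ε := by
        intro u
        obtain ⟨z, hz, hz'⟩ := hsub (s * u * v) hy
        obtain ⟨q, hq, hq'⟩ := hQ z hz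
        refine ⟨q, hq, act v z, hinv v z hz, ?_, hq'⟩
        rw [← hz', h.action _ _ _ (hFK hz)]
      have h2 : ∃ q ∈ Q, ∀ᶠ u in (U : Filter S), ∃ z ∈ F, y = act (s * u) z ∧ N (z - q) ≤ ε := by
        have := (Ultrafilter.finite_biUnion_mem_iff (f := U) Q.finite_toSet
          (s := fun q => {u | ∃ z ∈ F, y = act (s * u) z ∧ N (z - q) ≤ ε})).1
          (Filter.mem_of_superset Filter.univ_mem (fun u _ => by
            obtain ⟨q, hq, hz⟩ := h1 u
            exact mem_iUnion₂.2 ⟨q, hq, hz⟩))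
        exact this
      obtain ⟨q, hqQ, hq⟩ := h2
      have hqF := hQF hqQ
      obtain ⟨I, hI, hIc, hIle⟩ := h.san' (hFK hqF)
      refine ⟨act s (w q), ⟨w q, ⟨q, hqF, rfl⟩, rfl⟩, ?_⟩
      have t1 : Tendsto (fun u => act s (act u q)) (U : Filter S) (𝓝 (act s (w q))) := by
        refine ((h.contK s) (w q) (hFK (hwF q hqF))).tendsto.comp ?_
        exact tendsto_nhdsWithin_iff.2 ⟨hw q hqF,
          Filter.Eventually.of_forall fun u => hFK (hinv u q hqF)⟩
      refine h.lim_le tendsto_const_nhds t1 ?_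
      filter_upwards [hq, hUL I hI hIc] with u hu huI
      obtain ⟨z, hz, hyz, hzq⟩ := hu
      rw [hyz, ← h.action _ _ _ (hFK hqF), map_sub_rev]
      refine (hIle _ (hI.2 s u huI) z (hFK hz)).trans ?_
      rwa [map_sub_rev]
    refine closure_minimal ?_ hcl this
    exact image_mono subset_closure
  · obtain ⟨v, Q, hQF, hQ⟩ := h.cover hFK hFc hne hinv hmin hε
    refine ⟨Q, ?_⟩
    have hcl : IsClosed (⋃ q ∈ Q, {y | N (y - q) ≤ ε}) :=
      Q.finite_toSet.isClosed_biUnion fun q _ => h.ball' q ε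
    intro y hy
    have := closure_minimal (s := w '' F) (by
      intro y hy
      obtain ⟨z, hz, rfl⟩ := hsub v hy
      obtain ⟨q, hq, hq'⟩ := hQ z hz
      exact mem_iUnion₂.2 ⟨q, hq, hq'⟩) hcl hy
    obtain ⟨q, hq, hq'⟩ := mem_iUnion₂.1 this
    exact ⟨q, hq, hq'⟩

end FPSys

/-- asymptotic limit set -/
def limSet (act : S → W → W) (x : W) : Set W :=
  ⋂ t : S, closure (range fun s => act (s * t) x)

namespace FPSys

theorem isClosed_limSet (x : W) : IsClosed (limSet act x) :=
  isClosed_iInter fun _ => isClosed_closure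

theorem limSet_sub [T2Space W] [Nonempty S] (h : FPSys act K N) {x : W} (hx : x ∈ K) :
    limSet act x ⊆ K := by
  intro y hy
  have := mem_iInter.1 hy (Classical.arbitrary S)
  refine closure_minimal ?_ h.comp.isClosed this
  rintro _ ⟨s, rfl⟩
  exact h.maps _ x hx

theorem limSet_ne [Nonempty S] (h : FPSys act K N) {x : W} (hx : x ∈ K) :
    (limSet act x).Nonempty := by
  obtain ⟨U, hUL, -⟩ := exists_uf h.lrev h.rrev
  obtain ⟨y, hyK, hy⟩ := h.comp.ultrafilter_le_nhds' (U.map fun a => act a x)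
      (Filter.Eventually.of_forall (f := (U : Filter S)) fun a => h.maps a x hx)
  refine ⟨y, mem_iInter.2 fun t => ?_⟩
  refine isClosed_closure.mem_of_tendsto
    (show Tendsto (fun a => act a x) (U : Filter S) (𝓝 y) from hy) ?_
  have hL : closure (range fun s => s * t) ∈ U := by
    refine hUL _ (closure_left h.mulL ⟨range_nonempty _, ?_⟩) isClosed_closure
    rintro b _ ⟨i, rfl⟩
    exact ⟨b * i, mul_assoc _ _ _⟩
  filter_upwards [hL] with u hu
  refine map_mem_closure (f := fun s => act s x) (h.contS x hx) hu ?_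
  rintro _ ⟨s, rfl⟩
  exact ⟨s, rfl⟩

theorem limSet_inv [T2Space W] (h : FPSys act K N) {x : W} (hx : x ∈ K) (s : S) {y : W}
    (hy : y ∈ limSet act x) : act s y ∈ limSet act x := by
  have : Nonempty S := ⟨s⟩
  have hyK := h.limSet_sub hx hy
  refine mem_iInter.2 fun t => ?_
  have h1 := mem_iInter.1 hy t
  have hsub : range (fun s => act (s * t) x) ⊆ K := by
    rintro _ ⟨s, rfl⟩
    exact h.maps _ x hx
  have hc : ContinuousWithinAt (act s) (range fun s => act (s * t) x) y :=
    ((h.contK s) y hyK).mono hsub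
  refine hc.mem_closure h1 ?_
  rintro _ ⟨a, rfl⟩
  refine ⟨s * a, ?_⟩
  simp only [mul_assoc]
  rw [h.action s (a * t) x hx]

theorem exists_F [T2Space W] [Nonempty S] (h : FPSys act K N) {L : Set W} (hLK : L ⊆ K) (hLc : IsClosed L)
    (hne : L.Nonempty) (hinv : ∀ s : S, ∀ x ∈ L, act s x ∈ L) :
    ∃ F ⊆ L, IsClosed F ∧ F.Nonempty ∧ (∀ s : S, ∀ x ∈ F, act s x ∈ F) ∧
      ∀ y ∈ F, F ⊆ closure (range fun s => act s y) := by
  obtain ⟨F, hFL, hF⟩ := zorn_superset_nonempty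
    {A : Set W | A ⊆ L ∧ IsClosed A ∧ A.Nonempty ∧ ∀ s : S, ∀ x ∈ A, act s x ∈ A} (by
      intro c hc hch hcne
      refine ⟨⋂₀ c, ⟨?_, isClosed_sInter fun A hA => (hc hA).2.1, ?_, ?_⟩,
        fun A hA => sInter_subset_of_mem hA⟩
      · obtain ⟨A, hA⟩ := hcne
        exact (sInter_subset_of_mem hA).trans (hc hA).1
      · have := hcne.to_subtype
        exact IsCompact.nonempty_sInter_of_directed_nonempty_isCompact_isClosed
          (IsChain.directedOn (r := fun a b : Set W => a ⊇ b) hch.symm) (fun A hA => (hc hA).2.2.1)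
          (fun A hA => h.comp.of_isClosed_subset (hc hA).2.1 ((hc hA).1.trans hLK))
          (fun A hA => (hc hA).2.1)
      · intro s x hx A hA
        exact (hc hA).2.2.2 s x (hx A hA)) L ⟨Subset.rfl, hLc, hne, hinv⟩
  obtain ⟨-, hFc, hFne, hFi⟩ := hF.prop
  refine ⟨F, hFL, hFc, hFne, hFi, fun y hy => ?_⟩
  have hsub : closure (range fun s => act s y) ⊆ F :=
    closure_minimal (by rintro _ ⟨s, rfl⟩; exact hFi s y hy) hFc
  refine hF.le_of_le ⟨hsub.trans hFL, isClosed_closure, (range_nonempty _).closure, ?_⟩ hsub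
  intro s x hx
  have hc : ContinuousWithinAt (act s) (range fun s => act s y) x :=
    ((h.contK s) x (hLK (hFL (hsub hx)))).mono
      ((subset_closure.trans hsub).trans (hFL.trans hLK))
  refine hc.mem_closure hx ?_
  rintro _ ⟨a, rfl⟩
  exact ⟨s * a, h.action s a y (hLK (hFL hy))⟩

theorem exists_X [T2Space W] [Nonempty S] (h : FPSys act K N) :
    ∃ X, Minimal (fun A : Set W => A ⊆ K ∧ IsClosed A ∧ A.Nonempty ∧ Convex ℝ A ∧
      ∀ x ∈ A, limSet act x ⊆ A) X := by
  obtain ⟨F, hFL, hF⟩ := zorn_superset_nonempty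
    {A : Set W | A ⊆ K ∧ IsClosed A ∧ A.Nonempty ∧ Convex ℝ A ∧
      ∀ x ∈ A, limSet act x ⊆ A} (by
      intro c hc hch hcne
      refine ⟨⋂₀ c, ⟨?_, isClosed_sInter fun A hA => (hc hA).2.1, ?_, ?_, ?_⟩,
        fun A hA => sInter_subset_of_mem hA⟩
      · obtain ⟨A, hA⟩ := hcne
        exact (sInter_subset_of_mem hA).trans (hc hA).1
      · have := hcne.to_subtype
        exact IsCompact.nonempty_sInter_of_directed_nonempty_isCompact_isClosed
          (IsChain.directedOn (r := fun a b : Set W => a ⊇ b) hch.symm) (fun A hA => (hc hA).2.2.1)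
          (fun A hA => h.comp.of_isClosed_subset (hc hA).2.1 ((hc hA).1))
          (fun A hA => (hc hA).2.1)
      · exact convex_sInter fun A hA => (hc hA).2.2.2.1
      · intro x hx y hy A hA
        exact (hc hA).2.2.2.2 x (hx A hA) hy) K
      ⟨Subset.rfl, h.comp.isClosed, h.ne, h.conv, fun x hx => h.limSet_sub hx⟩
  exact ⟨F, hF⟩

/-- Chebyshev-type centre. -/
theorem center (N : Seminorm ℝ W) {C : Set W} {a b : W} (ha : a ∈ C) (hb : b ∈ C)
    (hab : 0 < N (a - b))
    (hcov : ∀ ε > 0, ∃ Q : Finset W, ∀ y ∈ C, ∃ q ∈ Q, N (y - q) ≤ ε) :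
    ∃ u ∈ convexHull ℝ C, ∃ r : ℝ, (∀ y ∈ C, N (u - y) ≤ r) ∧ ∃ x ∈ C, ∃ y ∈ C, r < N (x - y) := by
  classical
  have hcov' : ∀ ε > 0, ∃ Q : Finset W, (Q : Set W) ⊆ C ∧ ∀ y ∈ C, ∃ q ∈ Q, N (y - q) ≤ ε := by
    intro ε hε
    obtain ⟨Q, hQ⟩ := hcov (ε / 2) (by positivity)
    let Q1 := Q.filter fun q => ∃ y ∈ C, N (y - q) ≤ ε / 2
    have h1 : ∀ q ∈ Q1, ∃ y ∈ C, N (y - q) ≤ ε / 2 := fun q hq => (Finset.mem_filter.1 hq).2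
    choose! g hg hg' using h1
    refine ⟨Q1.image g, ?_, fun y hy => ?_⟩
    · intro z hz
      obtain ⟨s, hs, rfl⟩ := Finset.mem_image.1 (Finset.mem_coe.1 hz)
      exact hg s hs
    · obtain ⟨q, hq, hyq⟩ := hQ y hy
      have hq1 : q ∈ Q1 := Finset.mem_filter.2 ⟨hq, y, hy, hyq⟩
      refine ⟨g q, Finset.mem_image_of_mem _ hq1, ?_⟩
      have h3 := map_sub_le_add N (y - q) (g q - q)
      rw [sub_sub_sub_cancel_right] at h3
      linarith [hg' q hq1]
  -- boundedness
  let D : Set ℝ := {d | ∃ x ∈ C, ∃ y ∈ C, d = N (x - y)}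
  have hDne : D.Nonempty := ⟨_, a, ha, b, hb, rfl⟩
  have hDb : BddAbove D := by
    obtain ⟨Q, hQ⟩ := hcov 1 one_pos
    refine ⟨(1 + ∑ q ∈ Q, N q) + (1 + ∑ q ∈ Q, N q), ?_⟩
    have hb : ∀ y ∈ C, N y ≤ 1 + ∑ q ∈ Q, N q := by
      intro y hy
      obtain ⟨q, hq, hyq⟩ := hQ y hy
      have h1 : N q ≤ ∑ q ∈ Q, N q :=
        Finset.single_le_sum (f := fun q => N q) (fun i _ => apply_nonneg N i) hq
      have h2 := map_add_le_add N (y - q) q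
      rw [sub_add_cancel] at h2
      linarith
    rintro _ ⟨x, hx, y, hy, rfl⟩
    exact (map_sub_le_add N x y).trans (add_le_add (hb x hx) (hb y hy))
  set d := sSup D with hd
  have hle : ∀ x ∈ C, ∀ y ∈ C, N (x - y) ≤ d := fun x hx y hy => le_csSup hDb ⟨x, hx, y, hy, rfl⟩
  have hd0 : 0 < d := hab.trans_le (hle a ha b hb)
  obtain ⟨Q, hQC, hQ⟩ := hcov' (d / 2) (by positivity)
  have hQne : Q.Nonempty := by
    obtain ⟨q, hq, -⟩ := hQ a ha
    exact ⟨q, hq⟩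
  have hn : (0 : ℝ) < Q.card := by exact_mod_cast hQne.card_pos
  refine ⟨∑ q ∈ Q, (Q.card : ℝ)⁻¹ • q, ?_, d - (Q.card : ℝ)⁻¹ * (d / 2), ?_, ?_⟩
  · refine (convex_convexHull ℝ C).sum_mem (fun _ _ => by positivity) ?_
      (fun q hq => subset_convexHull ℝ C (hQC hq))
    simp [hn.ne']
  · intro y hy
    obtain ⟨q0, hq0, hyq⟩ := hQ y hy
    have e1 : ∑ q ∈ Q, (Q.card : ℝ)⁻¹ • q - y = ∑ q ∈ Q, (Q.card : ℝ)⁻¹ • (q - y) := by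
      simp only [smul_sub, Finset.sum_sub_distrib, Finset.sum_const]
      rw [← Nat.cast_smul_eq_nsmul ℝ, smul_smul, mul_inv_cancel₀ hn.ne', one_smul]
    rw [e1]
    have e2 : N (∑ q ∈ Q, (Q.card : ℝ)⁻¹ • (q - y)) ≤ ∑ q ∈ Q, (Q.card : ℝ)⁻¹ * N (q - y) := by
      refine (Finset.le_sum_of_subadditive N (map_zero N).le (map_add_le_add N) _ _).trans (le_of_eq ?_)
      refine Finset.sum_congr rfl fun q _ => ?_
      rw [map_smul_eq_mul, Real.norm_of_nonneg (by positivity)]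
    refine e2.trans ?_
    rw [← Finset.mul_sum]
    have e3 : ∑ q ∈ Q, N (q - y) ≤ Q.card * d - d / 2 := by
      rw [← Finset.add_sum_erase _ _ hq0]
      have e4 : ∑ q ∈ Q.erase q0, N (q - y) ≤ (Q.erase q0).card • d :=
        Finset.sum_le_card_nsmul _ _ _ fun q hq => hle q (hQC (Finset.mem_of_mem_erase hq)) y hy
      have e5 : ((Q.erase q0).card : ℝ) = Q.card - 1 := by
        rw [← Finset.card_erase_add_one hq0]; push_cast; ring
      rw [nsmul_eq_mul, e5] at e4
      rw [map_sub_rev] at hyq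
      linarith
    calc (Q.card : ℝ)⁻¹ * ∑ q ∈ Q, N (q - y) ≤ (Q.card : ℝ)⁻¹ * (Q.card * d - d / 2) := by gcongr
      _ = d - (Q.card : ℝ)⁻¹ * (d / 2) := by field_simp
  · have hlt : d - (Q.card : ℝ)⁻¹ * (d / 2) < sSup D := by
      have : 0 < (Q.card : ℝ)⁻¹ * (d / 2) := by positivity
      linarith
    obtain ⟨_, ⟨x, hx, y, hy, rfl⟩, hxy⟩ := exists_lt_of_lt_csSup hDne hlt
    exact ⟨x, hx, y, hy, hxy⟩

theorem fixed [IsTopologicalAddGroup W] [T2Space W] [TopologicalSpace.SeparableSpace S]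
    (h : FPSys act K N) : ∃ x ∈ K, ∀ s : S, act s x = x := by
  rcases isEmpty_or_nonempty S with hS | hS
  · obtain ⟨x, hx⟩ := h.ne
    exact ⟨x, hx, fun s => isEmptyElim s⟩
  obtain ⟨X, hX⟩ := h.exists_X
  obtain ⟨hXK, hXc, ⟨x0, hx0⟩, hXconv, hXL⟩ := hX.prop
  obtain ⟨F, hFL, hFc, hFne, hFi, hFm⟩ := h.exists_F (L := limSet act x0)
    (h.limSet_sub (hXK hx0)) (isClosed_limSet x0) (h.limSet_ne (hXK hx0))
    (fun s x hx => h.limSet_inv (hXK hx0) s hx)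
  have hFX : F ⊆ X := hFL.trans (hXL x0 hx0)
  obtain ⟨C, hCF, ⟨c, hc⟩, hCs, hCcov⟩ := h.exists_C (hFX.trans hXK) hFc hFne hFi hFm
  by_cases hsub : ∀ y ∈ C, y = c
  · refine ⟨c, hXK (hFX (hCF hc)), fun s => ?_⟩
    obtain ⟨z, hz, hz'⟩ := hCs s hc
    rwa [hsub z hz] at hz'
  exfalso
  push Not at hsub
  obtain ⟨b, hb, hbc⟩ := hsub
  have hpos : 0 < N (b - c) := by
    refine lt_of_le_of_ne (apply_nonneg N _) fun h0 => hbc ?_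
    have : b ∈ closure ({c} : Set W) :=
      h.clos _ _ fun ε hε => ⟨c, rfl, by rw [← h0]; exact hε.le⟩
    simpa using this
  obtain ⟨u, hu, r, hur, x, hx, y, hy, hxy⟩ := center N hb hc hpos hCcov
  have huX : u ∈ X := convexHull_min (hCF.trans hFX) hXconv hu
  have hX' := hX.le_of_le (y := X ∩ ⋂ z ∈ C, {x | N (x - z) ≤ r})
    ⟨inter_subset_left.trans hXK, hXc.inter (isClosed_biInter fun z _ => h.ball' z r),
      ⟨u, huX, mem_iInter₂.2 hur⟩, ?_, ?_⟩ inter_subset_left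
  · have := mem_iInter₂.1 (hX' (hFX (hCF hx))).2 y hy
    exact absurd hxy (not_lt.2 this)
  · refine hXconv.inter (convex_iInter₂ fun z _ => ?_)
    have : {x | N (x - z) ≤ r} = N.closedBall z r := by
      ext; simp [Seminorm.mem_closedBall]
    rw [this]
    exact N.convex_closedBall z r
  · rintro x ⟨hxX, hxr⟩ y hy
    refine ⟨hXL x hxX hy, mem_iInter₂.2 fun z hz => ?_⟩
    obtain ⟨I, hI, hIle⟩ := h.san x (hXK hxX)
    obtain ⟨t, ht⟩ := hI.1
    refine closure_minimal ?_ (h.ball' z r) (mem_iInter.1 hy t)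
    rintro _ ⟨s, rfl⟩
    obtain ⟨z', hz', rfl⟩ := hCs (s * t) hz
    exact (hIle _ (hI.2 s t ht) z' (hXK (hFX (hCF hz')))).trans (mem_iInter₂.1 hxr z' hz')

end FPSys

end Core

/-- let `S` be a separable and reversible (both left and right reversible)
semitopological semigroup and `K` a nonempty weakly compact convex subset of a Banach
space.  Every separately weakly continuous and super asymptotically nonexpansive action
of `S` on `K` has a common fixed point. -/
theorem common_fixed_point_separable_reversible
    {S E : Type*} [Semigroup S] [TopologicalSpace S] [T2Space S]
    [TopologicalSpace.SeparableSpace S]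
    [NormedAddCommGroup E] [NormedSpace ℝ E] [CompleteSpace E]
    -- `S` is a semitopological semigroup: multiplication is separately continuous
    (hmulL : ∀ t : S, Continuous fun s => t * s)
    (hmulR : ∀ t : S, Continuous fun s => s * t)
    (hlrev : LeftReversible S) (hrrev : RightReversible S)
    (K : Set E) (hKne : K.Nonempty) (hKconv : Convex ℝ K)
    (hKcomp : IsCompact (toWeakSpace ℝ E '' K))
    (act : S → E → E) (hmaps : ∀ s : S, Set.MapsTo (act s) K K)
    (haction : ∀ s t : S, ∀ x ∈ K, act (s * t) x = act s (act t x))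
    -- the action is separately weakly continuous
    (hcontS : ∀ x ∈ K, Continuous fun s : S => toWeakSpace ℝ E (act s x))
    (hcontK : ∀ s : S, ContinuousOn
      (fun x : WeakSpace ℝ E => toWeakSpace ℝ E (act s ((toWeakSpace ℝ E).symm x)))
      (toWeakSpace ℝ E '' K))
    (hsan : SuperAsympNonexpansive act K) :
    ∃ x₀ ∈ K, ∀ s : S, act s x₀ = x₀ := by
  rcases isEmpty_or_nonempty S with hS | hS
  · obtain ⟨x, hx⟩ := hKne
    exact ⟨x, hx, fun s => isEmptyElim s⟩
  have hcl : ∀ A : Set E, Convex ℝ A → IsClosed A → IsClosed (toWeakSpace ℝ E '' A) := by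
    intro A hA hA'
    have := hA.toWeakSpace_closure ℝ
    rw [hA'.closure_eq] at this
    rw [this]
    exact isClosed_closure
  have h : FPSys (W := WeakSpace ℝ E)
      (fun s x => toWeakSpace ℝ E (act s ((toWeakSpace ℝ E).symm x)))
      (toWeakSpace ℝ E '' K)
      ((normSeminorm ℝ E).comp ((toWeakSpace ℝ E).symm : WeakSpace ℝ E →ₗ[ℝ] E)) := by
    refine
    { mulL := hmulL
      mulR := hmulR
      lrev := hlrev
      rrev := hrrev
      ne := hKne.image _
      conv := hKconv.is_linear_image (toWeakSpace ℝ E).toLinearMap.isLinear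
      comp := hKcomp
      maps := ?_
      action := ?_
      contS := ?_
      contK := hcontK
      san := ?_
      ball := ?_
      clos := ?_
      sep := ?_ }
    · rintro s _ ⟨x, hx, rfl⟩
      exact ⟨act s x, hmaps s hx, by simp⟩
    · rintro s t _ ⟨x, hx, rfl⟩
      simp [haction s t x hx]
    · rintro _ ⟨x, hx, rfl⟩
      simpa using hcontS x hx
    · rintro _ ⟨x, hx, rfl⟩
      obtain ⟨t⟩ := hS
      obtain ⟨I, hI, -, h2⟩ := hsan x hx t
      refine ⟨I, hI, ?_⟩
      rintro s hs _ ⟨y, hy, rfl⟩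
      simpa using h2 s hs y hy
    · intro r
      have := hcl (Metric.closedBall 0 r) (convex_closedBall 0 r) Metric.isClosed_closedBall
      convert this using 1
      ext x
      simp [LinearEquiv.image_eq_preimage_symm]
    · intro A y hy
      have : (toWeakSpace ℝ E).symm y ∈ closure ((toWeakSpace ℝ E).symm '' A) := by
        rw [Metric.mem_closure_iff]
        intro ε hε
        obtain ⟨b, hb, hyb⟩ := hy (ε / 2) (by positivity)
        refine ⟨_, ⟨b, hb, rfl⟩, ?_⟩
        have hyb' : ‖(toWeakSpace ℝ E).symm y - (toWeakSpace ℝ E).symm b‖ ≤ ε / 2 := by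
          simpa using hyb
        rw [dist_eq_norm]
        linarith
      have h2 := map_mem_closure (toWeakSpaceCLM ℝ E).continuous this (t := A) (by
        rintro _ ⟨a, ha, rfl⟩
        exact ha)
      exact h2
    · intro D hD ε hε
      let D' : Set E := (toWeakSpace ℝ E).symm '' D
      have hsep : TopologicalSpace.IsSeparable
          (closure (Submodule.span ℝ D' : Set E)) :=
        (hD.image _).isSeparable.span.closure
      obtain ⟨c, hc, hc'⟩ := hsep
      have hne : (c ∪ {0}).Nonempty := ⟨0, Or.inr rfl⟩
      obtain ⟨f, hf⟩ := (hc.union (countable_singleton (0 : E))).exists_eq_range hne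
      refine ⟨fun n => toWeakSpace ℝ E (f n), fun y hy => ?_⟩
      have hcv : Convex ℝ (closure (Submodule.span ℝ D' : Set E)) :=
        (Submodule.span ℝ D').convex.closure
      have h1 := closure_minimal (s := D)
        (t := toWeakSpace ℝ E '' closure (Submodule.span ℝ D' : Set E)) (fun d hd =>
        ⟨(toWeakSpace ℝ E).symm d, subset_closure (Submodule.subset_span ⟨d, hd, rfl⟩), by simp⟩)
        (hcl _ hcv isClosed_closure) hy
      obtain ⟨z, hz, rfl⟩ := h1
      obtain ⟨b, hb, hzb⟩ := Metric.mem_closure_iff.1 (hc' hz) ε hε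
      have : b ∈ range f := by rw [← hf]; exact Or.inl hb
      obtain ⟨n, rfl⟩ := this
      refine ⟨n, ?_⟩
      rw [dist_eq_norm] at hzb
      simpa using hzb.le
  obtain ⟨_, ⟨x, hx, rfl⟩, hfix⟩ := h.fixed
  exact ⟨x, hx, fun s => by simpa using hfix s⟩
end

section
/- Let S be a separable and left reversible semitopological semigroup and K a weakly compact convex subset of a Banach space. Then every separately weakly continuous nonexpansive action of S on K has a common fixed point. -/
open Set Topology in
/-- `A` splits into finitely many pieces of `φ`-diameter at most `ε`. -/
def SmallCover {X E : Type*} [NormedAddCommGroup E] (φ : X → E) (ε : ℝ) (A : Set X) : Prop :=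
  ∃ (n : ℕ) (p : X → ℕ), ∀ x ∈ A, p x < n ∧ ∀ y ∈ A, p x = p y → dist (φ x) (φ y) ≤ ε

theorem SmallCover.mono {X E : Type*} [NormedAddCommGroup E] {φ : X → E} {ε : ℝ} {A B : Set X}
    (h : SmallCover φ ε B) (hAB : A ⊆ B) : SmallCover φ ε A := by
  obtain ⟨n, p, hp⟩ := h
  exact ⟨n, p, fun x hx => ⟨(hp x (hAB hx)).1, fun y hy => (hp x (hAB hx)).2 y (hAB hy)⟩⟩

theorem SmallCover.union {X E : Type*} [NormedAddCommGroup E] {φ : X → E} {ε : ℝ} {A B : Set X}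
    (hA : SmallCover φ ε A) (hB : SmallCover φ ε B) : SmallCover φ ε (A ∪ B) := by
  classical
  obtain ⟨n, p, hp⟩ := hA
  obtain ⟨m, q, hq⟩ := hB
  refine ⟨n + m, fun x => if x ∈ A then p x else n + q x, ?_⟩
  intro x hx
  by_cases hxA : x ∈ A
  · refine ⟨by simp only [hxA, if_true]; have := (hp x hxA).1; omega, ?_⟩
    intro y hy hxy
    by_cases hyA : y ∈ A
    · simp only [hxA, hyA, if_true] at hxy
      exact (hp x hxA).2 y hyA hxy
    · simp only [hxA, hyA, if_true, if_false] at hxy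
      have := (hp x hxA).1
      omega
  · have hxB : x ∈ B := hx.resolve_left hxA
    refine ⟨by simp only [hxA, if_false]; have := (hq x hxB).1; omega, ?_⟩
    intro y hy hxy
    by_cases hyA : y ∈ A
    · simp only [hxA, hyA, if_true, if_false] at hxy
      have := (hp y hyA).1
      omega
    · simp only [hxA, hyA, if_false] at hxy
      exact (hq x hxB).2 y (hy.resolve_left hyA) (by omega)

theorem SmallCover.image {X E : Type*} [NormedAddCommGroup E] {φ : X → E} {ε : ℝ} {A : Set X}
    (h : SmallCover φ ε A) (f : X → X) (hf : ∀ x y, dist (φ (f x)) (φ (f y)) ≤ dist (φ x) (φ y)) :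
    SmallCover φ ε (f '' A) := by
  classical
  obtain ⟨n, p, hp⟩ := h
  have hg : ∀ y : X, ∃ x, y ∈ f '' A → x ∈ A ∧ f x = y := by
    intro y
    by_cases hy : y ∈ f '' A
    · obtain ⟨x, hx⟩ := hy
      exact ⟨x, fun _ => hx⟩
    · exact ⟨y, fun h => absurd h hy⟩
  choose g hg using hg
  refine ⟨n, fun y => p (g y), fun y hy => ⟨(hp _ (hg y hy).1).1, fun z hz hyz => ?_⟩⟩
  have := (hp _ (hg y hy).1).2 _ (hg z hz).1 hyz
  have h2 := hf (g y) (g z)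
  rw [(hg y hy).2, (hg z hz).2] at h2
  exact h2.trans this

open Set Topology in
/-- a compact set which is locally small is small -/
theorem SmallCover.of_local {X E : Type*} [TopologicalSpace X] [NormedAddCommGroup E] {φ : X → E}
    {ε : ℝ} {A C : Set X} (hC : IsCompact C)
    (h : ∀ x ∈ C, ∃ U, IsOpen U ∧ x ∈ U ∧ SmallCover φ ε (U ∩ A)) :
    ∃ U, IsOpen U ∧ C ⊆ U ∧ SmallCover φ ε (U ∩ A) := by
  refine hC.induction_on (p := fun C => ∃ U, IsOpen U ∧ C ⊆ U ∧ SmallCover φ ε (U ∩ A)) ?_ ?_ ?_ ?_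
  · exact ⟨∅, isOpen_empty, Subset.rfl, 0, fun _ => 0, by simp⟩
  · rintro s t hst ⟨U, h1, h2, h3⟩
    exact ⟨U, h1, hst.trans h2, h3⟩
  · rintro s t ⟨U, h1, h2, h3⟩ ⟨V, k1, k2, k3⟩
    refine ⟨U ∪ V, h1.union k1, union_subset_union h2 k2, ?_⟩
    rw [union_inter_distrib_right]
    exact h3.union k3
  · intro x hx
    obtain ⟨U, h1, h2, h3⟩ := h x hx
    exact ⟨U, mem_nhdsWithin_of_mem_nhds (h1.mem_nhds h2), U, h1, Subset.rfl, h3⟩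

open Set Topology in
/-- a minimal closed set with `M ⊆ s M` is norm totally bounded -/
theorem smallCover_of_minimal {X E S : Type*} [TopologicalSpace X] [CompactSpace X] [T2Space X]
    [NormedAddCommGroup E] {φ : X → E} {ε : ℝ} (f : S → X → X) (hf : ∀ s, Continuous (f s))
    (hne : ∀ s x y, dist (φ (f s x)) (φ (f s y)) ≤ dist (φ x) (φ y))
    {M : Set X} (hM : IsClosed M) (hMs : ∀ s, M ⊆ f s '' M)
    (hmin : ∀ A, A ⊆ M → IsClosed A → A.Nonempty → (∀ s, A ⊆ f s '' A) → A = M)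
    (hfrag : ∃ U, IsOpen U ∧ (U ∩ M).Nonempty ∧ SmallCover φ ε (U ∩ M)) :
    SmallCover φ ε M := by
  set O : Set X := ⋃₀ {U | IsOpen U ∧ SmallCover φ ε (U ∩ M)} with hO
  have hOo : IsOpen O := isOpen_sUnion fun U hU => hU.1
  have hcl : IsClosed (M \ O) := hM.sdiff hOo
  have key : ∀ s, M \ O ⊆ f s '' (M \ O) := by
    intro s y hy
    by_contra hcon
    have hC : IsCompact (M ∩ f s ⁻¹' {y}) :=
      (hM.inter (isClosed_singleton.preimage (hf s))).isCompact
    obtain ⟨W, hW, hCW, hWs⟩ := SmallCover.of_local (φ := φ) (ε := ε) (A := M) hC (by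
      rintro x ⟨hxM, hxy⟩
      have hxO : x ∈ O := by
        by_contra hxO
        exact hcon ⟨x, ⟨hxM, hxO⟩, hxy⟩
      obtain ⟨U, hU, hxU⟩ := hxO
      exact ⟨U, hU.1, hxU, hU.2⟩)
    have hD : IsClosed (f s '' (M \ W)) :=
      ((hM.sdiff hW).isCompact.image (hf s)).isClosed
    apply hy.2
    refine ⟨(f s '' (M \ W))ᶜ, ⟨hD.isOpen_compl, ?_⟩, ?_⟩
    · refine (hWs.image (f s) (hne s)).mono ?_
      rintro z ⟨hz1, hz2⟩
      obtain ⟨x, hx, rfl⟩ := hMs s hz2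
      refine ⟨x, ⟨?_, hx⟩, rfl⟩
      by_contra hxW
      exact hz1 ⟨x, ⟨hx, hxW⟩, rfl⟩
    · rintro ⟨x, hx, hxy⟩
      exact hx.2 (hCW ⟨hx.1, hxy⟩)
  have hempty : M \ O = ∅ := by
    by_contra hne'
    have := hmin (M \ O) sdiff_subset hcl (nonempty_iff_ne_empty.2 hne') key
    obtain ⟨U, hU, ⟨x, hxU, hxM⟩, hUs⟩ := hfrag
    rw [← this] at hxM
    exact hxM.2 ⟨U, ⟨hU, hUs⟩, hxU⟩
  obtain ⟨U, -, hMU, hUs⟩ := SmallCover.of_local (φ := φ) (ε := ε) (A := M) hM.isCompact (by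
    intro x hx
    have : x ∈ O := by
      by_contra hxO
      exact (hempty ▸ (⟨hx, hxO⟩ : x ∈ M \ O) : x ∈ (∅ : Set X))
    obtain ⟨U, hU, hxU⟩ := this
    exact ⟨U, hU.1, hxU, hU.2⟩)
  exact hUs.mono (subset_inter hMU Subset.rfl)

open Set Topology in
/-- directed intersections commute with images, pointwise form -/
theorem mem_image_iInter_of_directed {X ι : Type*} [TopologicalSpace X] [CompactSpace X]
    [T2Space X] [Nonempty ι] (t : ι → Set X) (htd : Directed (· ⊇ ·) t)
    (htc : ∀ i, IsClosed (t i)) (g : X → X) (hg : Continuous g) (y : X)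
    (hy : ∀ i, y ∈ g '' t i) : y ∈ g '' (⋂ i, t i) := by
  have hcl : ∀ i, IsClosed (t i ∩ g ⁻¹' {y}) := fun i =>
    (htc i).inter (isClosed_singleton.preimage hg)
  obtain ⟨x, hx⟩ := IsCompact.nonempty_iInter_of_directed_nonempty_isCompact_isClosed
    (fun i => t i ∩ g ⁻¹' {y})
    (by
      intro i j
      obtain ⟨k, h1, h2⟩ := htd i j
      exact ⟨k, inter_subset_inter_left _ h1, inter_subset_inter_left _ h2⟩)
    (fun i => by obtain ⟨x, hx, hxy⟩ := hy i; exact ⟨x, hx, hxy⟩)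
    (fun i => (hcl i).isCompact) hcl
  rw [mem_iInter] at hx
  exact ⟨x, mem_iInter.2 fun i => (hx i).1, (hx (Classical.arbitrary ι)).2⟩

open Set Topology in
theorem exists_minimal_backward {X S : Type*} [TopologicalSpace X] [CompactSpace X]
    [T2Space X] (f : S → X → X) (hf : ∀ s, Continuous (f s))
    (F : Set X) (hF : IsClosed F) (hFne : F.Nonempty) (hFs : ∀ s, F ⊆ f s '' F) :
    ∃ M ⊆ F, IsClosed M ∧ M.Nonempty ∧ (∀ s, M ⊆ f s '' M) ∧
      ∀ A, A ⊆ M → IsClosed A → A.Nonempty → (∀ s, A ⊆ f s '' A) → A = M := by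
  obtain ⟨M, hMF, hM⟩ := zorn_superset_nonempty
    {A : Set X | IsClosed A ∧ A.Nonempty ∧ ∀ s, A ⊆ f s '' A} (by
      intro c hc hchain hcne
      have : Nonempty c := hcne.to_subtype
      have hd : Directed (· ⊇ ·) (fun i : c => (i : Set X)) := by
        intro i j
        rcases hchain.total i.2 j.2 with h | h
        · exact ⟨i, Subset.rfl, h⟩
        · exact ⟨j, h, Subset.rfl⟩
      refine ⟨⋂ i : c, (i : Set X), ⟨isClosed_iInter fun i => (hc i.2).1, ?_, ?_⟩,
        fun s hs => iInter_subset (fun i : c => (i : Set X)) ⟨s, hs⟩⟩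
      · exact IsCompact.nonempty_iInter_of_directed_nonempty_isCompact_isClosed _ hd
          (fun i => (hc i.2).2.1) (fun i => (hc i.2).1.isCompact) (fun i => (hc i.2).1)
      · intro s y hy
        refine mem_image_iInter_of_directed _ hd (fun i => (hc i.2).1) _ (hf s) y fun i => ?_
        exact (hc i.2).2.2 s (mem_iInter.1 hy i)) F ⟨hF, hFne, hFs⟩
  refine ⟨M, hMF, hM.prop.1, hM.prop.2.1, hM.prop.2.2, fun A hA h1 h2 h3 => ?_⟩
  exact hM.eq_of_subset ⟨h1, h2, h3⟩ hA |>.symm ▸ rfl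

open Set Topology in
theorem exists_backward {X S : Type*} [TopologicalSpace X] [CompactSpace X]
    [T2Space X] [Semigroup S] [TopologicalSpace S] [Nonempty S]
    (hmulL : ∀ t : S, Continuous fun s => t * s)
    (hmulR : ∀ t : S, Continuous fun s => s * t)
    (hlrev : LeftReversible S)
    (f : S → X → X) (hf : ∀ s, Continuous (f s)) (hfS : ∀ x, Continuous fun s => f s x)
    (hmul : ∀ s t x, f (s * t) x = f s (f t x))
    (Y : Set X) (hY : IsClosed Y) (hYne : Y.Nonempty) (hYs : ∀ s, MapsTo (f s) Y Y) :
    ∃ F ⊆ Y, IsClosed F ∧ F.Nonempty ∧ (∀ s, F ⊆ f s '' F) := by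
  have hcl : ∀ s, IsClosed (f s '' Y) := fun s => (hY.isCompact.image (hf s)).isClosed
  have hideal : ∀ a : S, IsRightIdeal (closure (range fun s => a * s)) := by
    intro a
    refine ⟨(range_nonempty _).closure, fun i hi s => ?_⟩
    refine map_mem_closure (f := fun r => r * s) (hmulR s) hi ?_
    rintro _ ⟨r, rfl⟩
    exact ⟨r * s, (mul_assoc _ _ _).symm⟩
  have hsub : ∀ a c : S, c ∈ closure (range fun s => a * s) → f c '' Y ⊆ f a '' Y := by
    rintro a c hc _ ⟨y, hy, rfl⟩
    have : f c y ∈ closure (f a '' Y) := by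
      refine map_mem_closure (f := fun r => f r y) (hfS y) hc ?_
      rintro _ ⟨r, rfl⟩
      exact ⟨f r y, hYs r hy, (hmul _ _ _).symm⟩
    rwa [(hcl a).closure_eq] at this
  have hd : Directed (· ⊇ ·) (fun s => f s '' Y) := by
    intro a b
    obtain ⟨c, hc1, hc2⟩ := hlrev _ _ (hideal a) (hideal b) isClosed_closure isClosed_closure
    exact ⟨c, hsub a c hc1, hsub b c hc2⟩
  refine ⟨⋂ s, f s '' Y, ?_, isClosed_iInter hcl, ?_, ?_⟩
  · obtain ⟨s⟩ := ‹Nonempty S›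
    exact (iInter_subset _ s).trans (hYs s).image_subset
  · exact IsCompact.nonempty_iInter_of_directed_nonempty_isCompact_isClosed _ hd
      (fun s => hYne.image _) (fun s => (hcl s).isCompact) hcl
  · intro t y hy
    refine mem_image_iInter_of_directed _ hd hcl _ (hf t) y fun s => ?_
    obtain ⟨z, hz, hzy⟩ := mem_iInter.1 hy (t * s)
    exact ⟨f s z, ⟨z, hz, rfl⟩, by rw [← hmul]; exact hzy⟩

open Set Topology in
theorem exists_small_piece {X E : Type*} [TopologicalSpace X] [CompactSpace X]
    [T2Space X] [NormedAddCommGroup E] (φ : X → E)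
    (hball : ∀ e r, IsClosed (φ ⁻¹' Metric.closedBall e r))
    (M : Set X) (hM : IsClosed M) (hMne : M.Nonempty)
    (hsep : TopologicalSpace.IsSeparable (φ '' M)) {ε : ℝ} (hε : 0 < ε) :
    ∃ U, IsOpen U ∧ (U ∩ M).Nonempty ∧ SmallCover φ ε (U ∩ M) := by
  obtain ⟨c, hc, hMc⟩ := hsep
  have : CompactSpace M := isCompact_iff_compactSpace.1 hM.isCompact
  have : Nonempty M := hMne.to_subtype
  have : Countable c := hc.to_subtype
  obtain ⟨e, he⟩ := nonempty_interior_of_iUnion_of_closed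
    (f := fun e : c => (Subtype.val : M → X) ⁻¹' (φ ⁻¹' Metric.closedBall (e : E) (ε / 2)))
    (fun e => (hball _ _).preimage continuous_subtype_val) (by
      refine eq_univ_of_forall fun x => ?_
      obtain ⟨e, he, hd⟩ := Metric.mem_closure_iff.1 (hMc ⟨x, x.2, rfl⟩) (ε / 2) (half_pos hε)
      exact mem_iUnion.2 ⟨⟨e, he⟩, hd.le⟩)
  obtain ⟨U, hU, hUe⟩ := isOpen_induced_iff.1 (isOpen_interior (s :=
    ((Subtype.val : M → X) ⁻¹' (φ ⁻¹' Metric.closedBall (e : E) (ε / 2)))))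
  refine ⟨U, hU, ?_, 1, fun _ => 0, ?_⟩
  · obtain ⟨x, hx⟩ := he
    rw [← hUe] at hx
    exact ⟨x, hx, x.2⟩
  · have hmem : ∀ x ∈ U ∩ M, dist (φ x) e ≤ ε / 2 := by
      rintro x ⟨hxU, hxM⟩
      have : (⟨x, hxM⟩ : M) ∈ (Subtype.val : M → X) ⁻¹' U := hxU
      rw [hUe] at this
      exact Metric.mem_closedBall.1 (interior_subset this :
        (⟨x, hxM⟩ : M) ∈ (Subtype.val : M → X) ⁻¹' (φ ⁻¹' Metric.closedBall (e : E) (ε / 2)))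
    intro x hx
    refine ⟨zero_lt_one, fun y hy _ => ?_⟩
    have := dist_triangle_right (φ x) (φ y) e
    linarith [hmem x hx, hmem y hy]

open Set Topology in
/-- totally bounded sets have normal structure -/
theorem exists_nondiametral {E : Type*} [NormedAddCommGroup E] [NormedSpace ℝ E]
    (A : Set E) (hA : TotallyBounded A) (hne : A.Nontrivial) :
    ∃ u ∈ convexHull ℝ A, ∃ r, (∀ y ∈ A, dist u y ≤ r) ∧ ∃ x ∈ A, ∃ y ∈ A, r < dist x y := by
  have hb : Bornology.IsBounded A := hA.isBounded
  set d := Metric.diam A with hd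
  have hdpos : 0 < d := by
    obtain ⟨x, hx, y, hy, hxy⟩ := hne
    exact (dist_pos.2 hxy).trans_le (Metric.dist_le_diam_of_mem hb hx hy)
  obtain ⟨t, htA, htf, hAt⟩ := Metric.finite_approx_of_totallyBounded hA (d / 2) (half_pos hdpos)
  lift t to Finset E using htf
  have htne : t.Nonempty := by
    obtain ⟨x, hx⟩ := hne.nonempty
    obtain ⟨y, hy, -⟩ := mem_iUnion₂.1 (hAt hx)
    exact ⟨y, hy⟩
  have hn : (0 : ℝ) < t.card := by exact_mod_cast htne.card_pos
  refine ⟨∑ i ∈ t, (t.card : ℝ)⁻¹ • i, ?_, d - d / (2 * t.card), ?_, ?_⟩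
  · refine (convex_convexHull ℝ A).sum_mem (fun _ _ => by positivity) ?_
      (fun i hi => subset_convexHull ℝ A (htA hi))
    simp [hn.ne']
  · intro y hy
    obtain ⟨x, hx, hxy⟩ := mem_iUnion₂.1 (hAt hy)
    have hx : x ∈ t := hx
    rw [Metric.mem_ball] at hxy
    have h1 : ∑ i ∈ t, (t.card : ℝ)⁻¹ • i - y = (t.card : ℝ)⁻¹ • ∑ i ∈ t, (i - y) := by
      rw [Finset.sum_sub_distrib, smul_sub, Finset.sum_const, ← Nat.cast_smul_eq_nsmul ℝ,
        smul_smul, inv_mul_cancel₀ hn.ne', one_smul, Finset.smul_sum]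
    classical
    have h2 : ∑ i ∈ t, ‖i - y‖ ≤ t.card * d - d / 2 := by
      rw [← Finset.add_sum_erase t _ hx]
      have h3 : ∑ i ∈ t.erase x, ‖i - y‖ ≤ (t.erase x).card • d := by
        refine Finset.sum_le_card_nsmul _ _ _ fun i hi => ?_
        rw [← dist_eq_norm]
        exact Metric.dist_le_diam_of_mem hb (htA (Finset.mem_of_mem_erase hi)) hy
      rw [Finset.card_erase_of_mem hx, nsmul_eq_mul, Nat.cast_sub htne.card_pos] at h3
      rw [dist_comm, dist_eq_norm] at hxy
      push_cast at h3
      linarith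
    rw [dist_eq_norm, h1, norm_smul, norm_inv, Real.norm_of_nonneg hn.le]
    calc (t.card : ℝ)⁻¹ * ‖∑ i ∈ t, (i - y)‖ ≤ (t.card : ℝ)⁻¹ * (t.card * d - d / 2) := by
          gcongr
          exact (norm_sum_le _ _).trans h2
      _ = d - d / (2 * t.card) := by field_simp
  · by_contra! hcon
    have hlt : 0 < d / (2 * t.card) := by positivity
    obtain ⟨x0, hx0⟩ := hne.nonempty
    have hr : 0 ≤ d - d / (2 * t.card) := dist_nonneg.trans (hcon x0 hx0 x0 hx0)
    have := Metric.diam_le_of_forall_dist_le hr hcon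
    linarith

open Set Topology in
theorem abstract_fixed_point {X E S : Type*} [TopologicalSpace X] [CompactSpace X]
    [T2Space X] [Nonempty X] [NormedAddCommGroup E] [NormedSpace ℝ E]
    [Semigroup S] [TopologicalSpace S] [TopologicalSpace.SeparableSpace S] [Nonempty S]
    (hmulL : ∀ t : S, Continuous fun s => t * s)
    (hmulR : ∀ t : S, Continuous fun s => s * t)
    (hlrev : LeftReversible S)
    (φ : X → E) (hφ : Function.Injective φ) (hconv : Convex ℝ (range φ))
    (hcl : ∀ B : Set E, Convex ℝ B → IsClosed B → IsClosed (φ ⁻¹' B))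
    (f : S → X → X) (hf : ∀ s, Continuous (f s)) (hfS : ∀ x, Continuous fun s => f s x)
    (hmul : ∀ s t x, f (s * t) x = f s (f t x))
    (hne : ∀ s x y, dist (φ (f s x)) (φ (f s y)) ≤ dist (φ x) (φ y)) :
    ∃ x, ∀ s, f s x = x := by
  have hball : ∀ e r, IsClosed (φ ⁻¹' Metric.closedBall e r) := fun e r =>
    hcl _ (convex_closedBall e r) Metric.isClosed_closedBall
  -- minimal convex invariant set
  obtain ⟨K, -, hK⟩ := zorn_superset_nonempty
    {C : Set X | IsClosed C ∧ C.Nonempty ∧ Convex ℝ (φ '' C) ∧ ∀ s, MapsTo (f s) C C} (by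
      intro c hc hchain hcne
      have : Nonempty c := hcne.to_subtype
      have hd : Directed (· ⊇ ·) (fun i : c => (i : Set X)) := by
        intro i j
        rcases hchain.total i.2 j.2 with h | h
        · exact ⟨i, Subset.rfl, h⟩
        · exact ⟨j, h, Subset.rfl⟩
      refine ⟨⋂ i : c, (i : Set X), ⟨isClosed_iInter fun i => (hc i.2).1, ?_, ?_, ?_⟩,
        fun s hs => iInter_subset (fun i : c => (i : Set X)) ⟨s, hs⟩⟩
      · exact IsCompact.nonempty_iInter_of_directed_nonempty_isCompact_isClosed _ hd
          (fun i => (hc i.2).2.1) (fun i => (hc i.2).1.isCompact) (fun i => (hc i.2).1)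
      · rw [hφ.injOn.image_iInter_eq]
        exact convex_iInter fun i => (hc i.2).2.2.1
      · intro s x hx
        exact mem_iInter.2 fun i => (hc i.2).2.2.2 s (mem_iInter.1 hx i)) univ
    ⟨isClosed_univ, univ_nonempty, by rwa [image_univ], fun s => mapsTo_univ _ _⟩
  obtain ⟨hKcl, ⟨x0, hx0⟩, hKconv, hKinv⟩ := hK.prop
  -- separable invariant subset
  set Y := closure (range fun s => f s x0) with hY
  have hYK : Y ⊆ K := closure_minimal (by rintro _ ⟨s, rfl⟩; exact hKinv s hx0) hKcl
  have hYinv : ∀ s, MapsTo (f s) Y Y := by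
    intro s y hy
    refine map_mem_closure (hf s) hy ?_
    rintro _ ⟨r, rfl⟩
    exact ⟨s * r, hmul _ _ _⟩
  have hYsep : TopologicalSpace.IsSeparable (φ '' Y) := by
    set L := (Submodule.span ℝ (range fun n => φ (f (TopologicalSpace.denseSeq S n) x0))).topologicalClosure
    have hL : TopologicalSpace.IsSeparable (L : Set E) :=
      ((countable_range _).isSeparable.span (R := ℝ)).closure
    refine hL.mono ?_
    have hLcl : IsClosed (φ ⁻¹' (L : Set E)) :=
      hcl _ L.convex (Submodule.isClosed_topologicalClosure _)
    rw [image_subset_iff]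
    refine closure_minimal ?_ hLcl
    rintro _ ⟨s, rfl⟩
    have h1 : IsClosed {s | f s x0 ∈ φ ⁻¹' (L : Set E)} := hLcl.preimage (hfS x0)
    have h2 := closure_minimal (s := range (TopologicalSpace.denseSeq S)) (by
      rintro _ ⟨n, rfl⟩
      exact Submodule.le_topologicalClosure _ (Submodule.subset_span ⟨n, rfl⟩)) h1
    rw [(TopologicalSpace.denseRange_denseSeq S).closure_range] at h2
    exact h2 (mem_univ s)
  obtain ⟨F, hFY, hFcl, hFne, hFs⟩ := exists_backward hmulL hmulR hlrev f hf hfS hmul Y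
    isClosed_closure (range_nonempty _).closure hYinv
  obtain ⟨M, hMF, hMcl, hMne, hMs, hmin⟩ := exists_minimal_backward f hf F hFcl hFne hFs
  have hMY : M ⊆ Y := hMF.trans hFY
  have htb : TotallyBounded (φ '' M) := by
    refine Metric.totallyBounded_of_finite_discretization fun ε hε => ?_
    obtain ⟨n, p, hp⟩ := smallCover_of_minimal (ε := ε / 2) f hf hne hMcl hMs hmin
      (exists_small_piece φ hball M hMcl hMne (hYsep.mono (image_mono hMY)) (half_pos hε))
    have hg : ∀ e : φ '' M, ∃ x ∈ M, φ x = e := fun e => e.2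
    choose g hgM hge using hg
    refine ⟨ULift (Fin n), inferInstance, fun e => ⟨⟨p (g e), (hp _ (hgM e)).1⟩⟩, ?_⟩
    intro x y hxy
    have hxy' : p (g x) = p (g y) := by simpa using hxy
    have := (hp _ (hgM x)).2 _ (hgM y) hxy'
    rw [hge, hge] at this
    linarith
  have hsub : M.Subsingleton := by
    by_contra hns
    rw [not_subsingleton_iff] at hns
    obtain ⟨u, hu, r, hur, x, hx, y, hy, hxy⟩ := exists_nondiametral _ htb (hns.image hφ)
    have huK : u ∈ φ '' K := convexHull_min (image_mono (hMY.trans hYK)) hKconv hu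
    obtain ⟨v, hvK, rfl⟩ := huK
    set K' := K ∩ φ ⁻¹' (⋂ m ∈ φ '' M, Metric.closedBall m r) with hK'
    have hB : Convex ℝ (⋂ m ∈ φ '' M, Metric.closedBall m r) :=
      convex_iInter₂ fun m _ => convex_closedBall m r
    have hBc : IsClosed (⋂ m ∈ φ '' M, Metric.closedBall m r) :=
      isClosed_biInter fun m _ => Metric.isClosed_closedBall
    have hKK : K' = K := by
      refine (hK.eq_of_subset ?_ inter_subset_left) |>.symm ▸ rfl
      refine ⟨hKcl.inter (hcl _ hB hBc), ⟨v, hvK, ?_⟩, ?_, ?_⟩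
      · exact mem_iInter₂.2 fun m hm => hur m hm
      · rw [image_inter_preimage]
        exact hKconv.inter hB
      · rintro s z ⟨hzK, hz⟩
        refine ⟨hKinv s hzK, mem_iInter₂.2 ?_⟩
        rintro _ ⟨m, hm, rfl⟩
        obtain ⟨m', hm', rfl⟩ := hMs s hm
        exact (hne s z m').trans (mem_iInter₂.1 hz _ ⟨m', hm', rfl⟩)
    obtain ⟨x, hx, rfl⟩ := hx
    have : x ∈ K' := hKK ▸ hYK (hMY hx)
    have h3 := mem_iInter₂.1 this.2 _ hy
    exact absurd h3 (not_le.2 hxy)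
  obtain ⟨m, hm⟩ := hMne
  refine ⟨m, fun s => ?_⟩
  obtain ⟨m', hm', h⟩ := hMs s hm
  rwa [hsub hm' hm] at h

/-- let `S` be a separable and left reversible semitopological semigroup
and `K` a nonempty weakly compact convex subset of a Banach space.  Every separately
weakly continuous nonexpansive action of `S` on `K` has a common fixed point. -/
theorem common_fixed_point_separable_leftReversible_nonexpansive
    {S E : Type*} [Semigroup S] [TopologicalSpace S] [T2Space S]
    [TopologicalSpace.SeparableSpace S]
    [NormedAddCommGroup E] [NormedSpace ℝ E] [CompleteSpace E]
    -- `S` is a semitopological semigroup: multiplication is separately continuous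
    (hmulL : ∀ t : S, Continuous fun s => t * s)
    (hmulR : ∀ t : S, Continuous fun s => s * t)
    (hlrev : LeftReversible S)
    (K : Set E) (hKne : K.Nonempty) (hKconv : Convex ℝ K)
    (hKcomp : IsCompact (toWeakSpace ℝ E '' K))
    (act : S → E → E) (hmaps : ∀ s : S, Set.MapsTo (act s) K K)
    (haction : ∀ s t : S, ∀ x ∈ K, act (s * t) x = act s (act t x))
    -- the action is separately weakly continuous
    (hcontS : ∀ x ∈ K, Continuous fun s : S => toWeakSpace ℝ E (act s x))
    (hcontK : ∀ s : S, ContinuousOn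
      (fun x : WeakSpace ℝ E => toWeakSpace ℝ E (act s ((toWeakSpace ℝ E).symm x)))
      (toWeakSpace ℝ E '' K))
    -- the action is nonexpansive
    (hne : ∀ s : S, ∀ x ∈ K, ∀ y ∈ K, ‖act s x - act s y‖ ≤ ‖x - y‖) :
    ∃ x₀ ∈ K, ∀ s : S, act s x₀ = x₀ := by
  classical
  rcases isEmpty_or_nonempty S with hS | hS
  · obtain ⟨x, hx⟩ := hKne
    exact ⟨x, hx, fun s => (hS.false s).elim⟩
  set w := toWeakSpace ℝ E with hw
  have hcX : CompactSpace (w '' K) := isCompact_iff_compactSpace.1 hKcomp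
  have hneX : Nonempty (w '' K) := (hKne.image _).to_subtype
  have hmem : ∀ x : w '' K, w.symm x.1 ∈ K := by
    rintro ⟨_, y, hy, rfl⟩
    simpa using hy
  obtain ⟨x, hx⟩ := abstract_fixed_point (X := w '' K) hmulL hmulR hlrev
    (fun x => w.symm x.1)
    (fun x y h => Subtype.ext (w.symm.injective h))
    (by
      convert hKconv
      ext y
      constructor
      · rintro ⟨x, rfl⟩
        exact hmem x
      · intro hy
        exact ⟨⟨w y, y, hy, rfl⟩, by simp⟩)
    (by
      intro B hB hBc
      have h1 := hB.toWeakSpace_closure ℝ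
      rw [hBc.closure_eq] at h1
      have h2 : IsClosed (w '' B) := by
        rw [hw, h1]
        exact isClosed_closure
      convert h2.preimage (continuous_subtype_val (p := fun x => x ∈ w '' K)) using 1
      ext x
      simp only [Set.mem_preimage, Set.mem_image]
      constructor
      · intro h
        exact ⟨_, h, by simp⟩
      · rintro ⟨y, hy, h⟩
        rw [← h]
        simpa using hy)
    (fun s x => ⟨w (act s (w.symm x.1)), _, hmaps s (hmem x), rfl⟩)
    (fun s => ((hcontK s).domRestrict).subtype_mk _)
    (fun x => (hcontS _ (hmem x)).subtype_mk _)
    (by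
      intro s t x
      apply Subtype.ext
      simp [haction s t _ (hmem x)])
    (by
      intro s x y
      simp only [LinearEquiv.symm_apply_apply, dist_eq_norm]
      exact hne s _ (hmem x) _ (hmem y))
  refine ⟨w.symm x.1, hmem x, fun s => ?_⟩
  have := congrArg (fun z => w.symm z.1) (hx s)
  simpa using this
end

section
/- Let K be a nonempty weakly compact convex subset of a Banach space and T₁,…,T_k a commuting family of weakly continuous maps of K into K, each pointwise eventually nonexpansive (for each x there is N_i(x) such that ‖T_i^n x − T_i^n y‖ ≤ ‖x − y‖ for all y ∈ K, n ≥ N_i(x)). Then T₁,…,T_k have a common fixed point. -/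
theorem aux_zorn_s17 {X : Type*} [TopologicalSpace X] [CompactSpace X] (R : Set X → Prop)
    (hR : ∀ c : Set (Set X), (∀ s ∈ c, R s) → R (⋂₀ c))
    (C : Set X) (hC : IsClosed C) (hne : C.Nonempty) (hRC : R C) :
    ∃ M ⊆ C, IsClosed M ∧ M.Nonempty ∧ R M ∧
      ∀ M' ⊆ M, IsClosed M' → M'.Nonempty → R M' → M' = M := by
  obtain ⟨M, hMC, hM⟩ := zorn_superset_nonempty {s : Set X | IsClosed s ∧ s.Nonempty ∧ R s}
    (by
      intro c hc hchain hcne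
      refine ⟨⋂₀ c, ⟨isClosed_sInter fun s hs => (hc hs).1, ?_, hR c fun s hs => (hc hs).2.2⟩,
        fun s hs => Set.sInter_subset_of_mem hs⟩
      have := hcne.to_subtype
      refine IsCompact.nonempty_sInter_of_directed_nonempty_isCompact_isClosed ?_ ?_ ?_ ?_
      · intro a ha b hb
        rcases hchain.total ha hb with h | h
        · exact ⟨a, ha, subset_rfl, h⟩
        · exact ⟨b, hb, h, subset_rfl⟩
      · exact fun s hs => (hc hs).2.1
      · exact fun s hs => (hc hs).1.isCompact
      · exact fun s hs => (hc hs).1) C ⟨hC, hne, hRC⟩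
  refine ⟨M, hMC, hM.prop.1, hM.prop.2.1, hM.prop.2.2, fun M' h1 h2 h3 h4 => ?_⟩
  exact h1.antisymm (hM.le_of_le ⟨h2, h3, h4⟩ h1)

/-- limit set along good indices -/
def auxOmega {X E N : Type*} [TopologicalSpace X] [NormedAddCommGroup E] [AddCommMonoid N]
    (ι : X → E) (g : N → X → X) (x : X) : Set X :=
  ⋂ F : Finset N, closure {z | ∃ r : N, z = g r x ∧ ∀ n ∈ F, ∀ y,
    ‖ι (g (r + n) x) - ι (g (r + n) y)‖ ≤ ‖ι x - ι y‖}

theorem auxOmega_nonempty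
    {X E N : Type*} [TopologicalSpace X] [CompactSpace X] [NormedAddCommGroup E] [AddCommMonoid N]
    (ι : X → E) (g : N → X → X)
    (thick : ∀ u, ∀ F : Finset N, ∃ r, ∀ n ∈ F, ∀ y,
      ‖ι (g (r + n) u) - ι (g (r + n) y)‖ ≤ ‖ι u - ι y‖)
    (x : X) : (auxOmega ι g x).Nonempty := by
  classical
  refine IsCompact.nonempty_iInter_of_directed_nonempty_isCompact_isClosed _ ?_ ?_ ?_ ?_
  · intro F G
    refine ⟨F ∪ G, closure_mono ?_, closure_mono ?_⟩
    · rintro z ⟨r, h, h'⟩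
      exact ⟨r, h, fun n hn => h' n (Finset.mem_union_left _ hn)⟩
    · rintro z ⟨r, h, h'⟩
      exact ⟨r, h, fun n hn => h' n (Finset.mem_union_right _ hn)⟩
  · intro F
    obtain ⟨r, hr⟩ := thick x F
    exact ⟨g r x, subset_closure ⟨r, rfl, hr⟩⟩
  · exact fun F => isClosed_closure.isCompact
  · exact fun F => isClosed_closure

theorem auxOmega_inv
    {X E N : Type*} [TopologicalSpace X] [NormedAddCommGroup E] [AddCommMonoid N]
    (ι : X → E) (g : N → X → X) (hgc : ∀ n, Continuous (g n))
    (hga : ∀ a b x, g (a + b) x = g a (g b x))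
    (x : X) (t : N) : ∀ z ∈ auxOmega ι g x, g t z ∈ auxOmega ι g x := by
  classical
  intro z hz
  refine Set.mem_iInter.2 fun F => ?_
  have h := Set.mem_iInter.1 hz (F.image (fun n => t + n))
  refine map_mem_closure (hgc t) h ?_
  rintro _ ⟨r, rfl, hr⟩
  refine ⟨t + r, (hga _ _ _).symm, fun n hn y => ?_⟩
  have := hr (t + n) (Finset.mem_image_of_mem _ hn) y
  rwa [show t + r + n = r + (t + n) by abel]

/-- a minimal invariant set has finite nets -/
theorem aux_net
    {X E N : Type*} [TopologicalSpace X] [CompactSpace X] [T2Space X]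
    [NormedAddCommGroup E] [NormedSpace ℝ E] [AddCommMonoid N]
    (ι : X → E)
    (hclosed : ∀ A : Set E, Convex ℝ A → IsClosed A → IsClosed (ι ⁻¹' A))
    (g : N → X → X) (hgc : ∀ n, Continuous (g n)) (hg0 : ∀ x, g 0 x = x)
    (hga : ∀ a b x, g (a + b) x = g a (g b x))
    (thick : ∀ u, ∀ F : Finset N, ∃ r, ∀ n ∈ F, ∀ y,
      ‖ι (g (r + n) u) - ι (g (r + n) y)‖ ≤ ‖ι u - ι y‖)
    [Countable N] (M : Set X) (hMcl : IsClosed M) (hMne : M.Nonempty)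
    (hMinv : ∀ t, ∀ x ∈ M, g t x ∈ M)
    (hMmin : ∀ M' ⊆ M, IsClosed M' → M'.Nonempty → (∀ t, ∀ x ∈ M', g t x ∈ M') → M' = M)
    (ε : ℝ) (hε : 0 < ε) :
    (∀ t, g t '' M = M) ∧
    ∃ F : Finset X, (∀ x ∈ F, x ∈ M) ∧ ∀ m ∈ M, ∃ x ∈ F, ‖ι m - ι x‖ ≤ ε := by
  classical
  have hsurj : ∀ t, g t '' M = M := by
    intro t
    refine hMmin _ ?_ ?_ (hMne.image _) ?_
    · rintro _ ⟨x, hx, rfl⟩; exact hMinv t x hx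
    · exact (hMcl.isCompact.image (hgc t)).isClosed
    · rintro s _ ⟨x, hx, rfl⟩
      exact ⟨g s x, hMinv s x hx, by rw [← hga, ← hga, add_comm]⟩
  refine ⟨hsurj, ?_⟩
  have horb : ∀ x ∈ M, closure (Set.range fun n => g n x) = M := by
    intro x hx
    refine hMmin _ ?_ isClosed_closure ⟨x, subset_closure ⟨0, hg0 x⟩⟩ ?_
    · refine closure_minimal ?_ hMcl
      rintro _ ⟨n, rfl⟩; exact hMinv n x hx
    · intro t z hz
      refine map_mem_closure (hgc t) hz ?_
      rintro _ ⟨n, rfl⟩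
      exact ⟨t + n, hga _ _ _⟩
  -- separability
  obtain ⟨x₀, hx₀⟩ := hMne
  have hsep : TopologicalSpace.IsSeparable (ι '' M) := by
    have h1 : TopologicalSpace.IsSeparable
        ((Submodule.span ℝ (Set.range fun n => ι (g n x₀))).topologicalClosure : Set E) := by
      rw [Submodule.topologicalClosure_coe]
      exact ((Set.countable_range _).isSeparable.span (R := ℝ)).closure
    refine h1.mono ?_
    rw [Set.image_subset_iff]
    rw [← horb x₀ hx₀]
    refine closure_minimal ?_ (hclosed _ (Submodule.convex _) (Submodule.isClosed_topologicalClosure _))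
    rintro _ ⟨n, rfl⟩
    exact Submodule.le_topologicalClosure _ (Submodule.subset_span ⟨n, rfl⟩)
  obtain ⟨c, hcc, hcM⟩ := hsep
  have : CompactSpace M := isCompact_iff_compactSpace.1 hMcl.isCompact
  have : Nonempty M := ⟨⟨x₀, hx₀⟩⟩
  have := hcc.to_subtype
  obtain ⟨⟨a, ha⟩, b, hb⟩ := nonempty_interior_of_iUnion_of_closed
    (X := M) (f := fun a : c => Subtype.val ⁻¹' (ι ⁻¹' Metric.closedBall (a : E) (ε / 2)))
    (fun a => (hclosed _ (convex_closedBall _ _) Metric.isClosed_closedBall).preimage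
      continuous_subtype_val)
    (by
      refine Set.eq_univ_of_forall fun m => ?_
      have := hcM ⟨m, m.2, rfl⟩
      obtain ⟨a, ha, h⟩ := Metric.mem_closure_iff.1 this (ε / 2) (by positivity)
      exact Set.mem_iUnion.2 ⟨⟨a, ha⟩, h.le⟩)
  obtain ⟨U, hUs, hUo, hbU⟩ := mem_interior.1 hb
  obtain ⟨V, hVo, rfl⟩ := isOpen_induced_iff.1 hUo
  -- finite cover
  obtain ⟨F, hF⟩ := hMcl.isCompact.elim_finite_subcover (fun n => g n ⁻¹' V)
    (fun n => hVo.preimage (hgc n)) (by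
      intro x hx
      have : (b : X) ∈ closure (Set.range fun n => g n x) := by rw [horb x hx]; exact b.2
      obtain ⟨_, hv, n, rfl⟩ := mem_closure_iff.1 this V hVo hbU
      exact Set.mem_iUnion.2 ⟨n, hv⟩)
  let t : N → N := fun i => ∑ j ∈ F.erase i, j
  obtain ⟨r, hr⟩ := thick b (F.image t)
  refine ⟨F.image (fun i => g (r + t i) b), ?_, ?_⟩
  · intro x hx
    obtain ⟨i, -, rfl⟩ := Finset.mem_image.1 hx
    exact hMinv _ _ b.2
  · intro m hm
    rw [← hsurj (r + ∑ j ∈ F, j)] at hm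
    obtain ⟨x, hx, rfl⟩ := hm
    obtain ⟨i, hi, hxi⟩ := Set.mem_iUnion₂.1 (hF hx)
    refine ⟨_, Finset.mem_image_of_mem _ hi, ?_⟩
    have e : r + ∑ j ∈ F, j = (r + t i) + i := by
      rw [add_assoc, Finset.sum_erase_add _ _ hi]
    rw [e, hga, norm_sub_rev]
    refine (hr _ (Finset.mem_image_of_mem _ hi) _).trans ?_
    have h1 : dist (ι b) a ≤ ε / 2 := hUs hbU
    have h2 : dist (ι (g i x)) a ≤ ε / 2 := @hUs ⟨g i x, hMinv i x hx⟩ hxi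
    rw [← dist_eq_norm]
    linarith [dist_triangle_right (ι b) (ι (g i x)) a]

theorem aux_fix
    {X E N : Type*} [TopologicalSpace X] [CompactSpace X] [T2Space X]
    [NormedAddCommGroup E] [NormedSpace ℝ E] [AddCommMonoid N]
    (ι : X → E)
    (hclosed : ∀ A : Set E, Convex ℝ A → IsClosed A → IsClosed (ι ⁻¹' A))
    (g : N → X → X) (hgc : ∀ n, Continuous (g n)) (hg0 : ∀ x, g 0 x = x)
    (hga : ∀ a b x, g (a + b) x = g a (g b x))
    (thick : ∀ u, ∀ F : Finset N, ∃ r, ∀ n ∈ F, ∀ y,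
      ‖ι (g (r + n) u) - ι (g (r + n) y)‖ ≤ ‖ι u - ι y‖)
    [Countable N] [Nonempty X] (hinj : Function.Injective ι)
    (hconv : Convex ℝ (Set.range ι)) : ∃ x, ∀ n, g n x = x := by
  classical
  obtain ⟨C, -, hCcl, hCne, ⟨hCconv, hCΩ⟩, hCmin⟩ := aux_zorn_s17
    (fun C : Set X => (∀ x ∈ C, ∀ y ∈ C, ∀ z, ι z ∈ segment ℝ (ι x) (ι y) → z ∈ C) ∧
      ∀ x ∈ C, auxOmega ι g x ⊆ C)
    (by
      intro c hc
      refine ⟨fun x hx y hy z hz s hs => (hc s hs).1 x (hx s hs) y (hy s hs) z hz,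
        fun x hx z hz s hs => (hc s hs).2 x (hx s hs) hz⟩)
    Set.univ isClosed_univ Set.univ_nonempty ⟨by simp, by simp⟩
  obtain ⟨x₀, hx₀⟩ := hCne
  obtain ⟨M, hMΩ, hMcl, hMne, hMinv, hMmin⟩ := aux_zorn_s17
    (fun C : Set X => ∀ t, ∀ x ∈ C, g t x ∈ C)
    (fun c hc t x hx s hs => hc s hs t x (hx s hs))
    (auxOmega ι g x₀) (isClosed_iInter fun _ => isClosed_closure)
    (auxOmega_nonempty ι g thick x₀)
    (auxOmega_inv ι g hgc hga x₀)
  have hMC : M ⊆ C := hMΩ.trans (hCΩ x₀ hx₀)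
  have net := aux_net ι hclosed g hgc hg0 hga thick M hMcl hMne hMinv hMmin
  obtain ⟨m₀, hm₀⟩ := hMne
  by_cases hsing : ∀ m ∈ M, m = m₀
  · exact ⟨m₀, fun n => hsing _ (hMinv n _ hm₀)⟩
  exfalso
  push Not at hsing
  obtain ⟨m₁, hm₁, hne⟩ := hsing
  have hbdd : Bornology.IsBounded (ι '' M) := by
    obtain ⟨F, -, hF⟩ := (net 1 one_pos).2
    have : ι '' M ⊆ ⋃ x ∈ F, Metric.closedBall (ι x) 1 := by
      rintro _ ⟨m, hm, rfl⟩
      obtain ⟨x, hx, h⟩ := hF m hm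
      exact Set.mem_iUnion₂.2 ⟨x, hx, by rwa [Metric.mem_closedBall, dist_eq_norm]⟩
    refine Bornology.IsBounded.subset ?_ this
    exact (Bornology.isBounded_biUnion_finset F).2 fun x _ => Metric.isBounded_closedBall
  set d := Metric.diam (ι '' M) with hd
  have hdist : ∀ x ∈ M, ∀ y ∈ M, ‖ι x - ι y‖ ≤ d := by
    intro x hx y hy
    rw [← dist_eq_norm]
    exact Metric.dist_le_diam_of_mem hbdd ⟨x, hx, rfl⟩ ⟨y, hy, rfl⟩
  have hdpos : 0 < d := by
    refine lt_of_lt_of_le ?_ (hdist m₁ hm₁ m₀ hm₀)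
    exact norm_pos_iff.2 (sub_ne_zero.2 fun h => hne (hinj h))
  obtain ⟨F, hFM, hF⟩ := (net (d / 2) (by positivity)).2
  have hFne : F.Nonempty := by
    obtain ⟨x, hx, -⟩ := hF m₀ hm₀; exact ⟨x, hx⟩
  have hcard : (0 : ℝ) < F.card := by exact_mod_cast hFne.card_pos
  have hCc : Convex ℝ (ι '' C) := by
    rw [convex_iff_segment_subset]
    rintro _ ⟨x, hx, rfl⟩ _ ⟨y, hy, rfl⟩ w hw
    obtain ⟨z, rfl⟩ := hconv.segment_subset ⟨x, rfl⟩ ⟨y, rfl⟩ hw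
    exact ⟨z, hCconv x hx y hy z hw, rfl⟩
  have hsum1 : ∑ _x ∈ F, (F.card : ℝ)⁻¹ = 1 := by
    rw [Finset.sum_const, nsmul_eq_mul, mul_inv_cancel₀ hcard.ne']
  obtain ⟨u, huC, hu⟩ : ∑ x ∈ F, (F.card : ℝ)⁻¹ • ι x ∈ ι '' C :=
    hCc.sum_mem (fun _ _ => by positivity) hsum1 fun x hx => ⟨x, hMC (hFM x hx), rfl⟩
  set ρ := d - (F.card : ℝ)⁻¹ * (d / 2) with hρ
  have hρd : ρ < d := by
    have : 0 < (F.card : ℝ)⁻¹ * (d / 2) := by positivity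
    linarith
  have huρ : ∀ m ∈ M, ‖ι u - ι m‖ ≤ ρ := by
    intro m hm
    have e : ι u - ι m = ∑ x ∈ F, (F.card : ℝ)⁻¹ • (ι x - ι m) := by
      simp only [smul_sub]
      rw [Finset.sum_sub_distrib, ← Finset.sum_smul, hsum1, one_smul, hu]
    obtain ⟨x₁, hx₁, hx₁m⟩ := hF m hm
    rw [e]
    calc _ ≤ ∑ x ∈ F, (F.card : ℝ)⁻¹ * (if x = x₁ then d / 2 else d) := by
          refine norm_sum_le_of_le _ fun x hx => ?_
          rw [norm_smul, Real.norm_of_nonneg (by positivity)]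
          gcongr
          split_ifs with h
          · rw [h, norm_sub_rev]; exact hx₁m
          · exact hdist x (hFM x hx) m hm
      _ = ∑ x ∈ F, ((F.card : ℝ)⁻¹ * d - if x = x₁ then (F.card : ℝ)⁻¹ * (d / 2) else 0) := by
          refine Finset.sum_congr rfl fun x _ => ?_
          split_ifs <;> ring
      _ = ρ := by
          rw [Finset.sum_sub_distrib, Finset.sum_ite_eq' F x₁, if_pos hx₁, ← Finset.sum_mul,
            hsum1, one_mul]
  -- the smaller set
  set B : Set E := ⋂ m ∈ M, Metric.closedBall (ι m) ρ with hB
  have hBconv : Convex ℝ B := convex_iInter₂ fun _ _ => convex_closedBall _ _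
  have hBcl : IsClosed B := isClosed_biInter fun _ _ => Metric.isClosed_closedBall
  have hmemB : ∀ w, w ∈ B ↔ ∀ m ∈ M, ‖w - ι m‖ ≤ ρ := by
    intro w; simp [hB, dist_eq_norm]
  have hBX := hclosed B hBconv hBcl
  have hC0 : C ∩ ι ⁻¹' B = C := by
    refine hCmin _ Set.inter_subset_left (hCcl.inter hBX) ⟨u, huC, (hmemB _).2 huρ⟩ ⟨?_, ?_⟩
    · intro x hx y hy z hz
      exact ⟨hCconv x hx.1 y hy.1 z hz, hBconv.segment_subset hx.2 hy.2 hz⟩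
    · intro x hx z hz
      refine ⟨hCΩ x hx.1 hz, ?_⟩
      refine closure_minimal ?_ hBX (Set.mem_iInter.1 hz {0})
      rintro _ ⟨r, rfl, hr⟩
      refine (hmemB _).2 fun m hm => ?_
      rw [← (net 1 one_pos).1 r] at hm
      obtain ⟨m', hm', rfl⟩ := hm
      have := hr 0 (Finset.mem_singleton_self _) m'
      rw [add_zero] at this
      exact this.trans ((hmemB _).1 hx.2 m' hm')
  have : d ≤ ρ := by
    have h1 : ∀ x ∈ M, ∀ y ∈ M, ‖ι x - ι y‖ ≤ ρ := fun x hx y hy => by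
      have : x ∈ C ∩ ι ⁻¹' B := by rw [hC0]; exact hMC hx
      exact (hmemB _).1 this.2 y hy
    refine Metric.diam_le_of_forall_dist_le ((norm_nonneg _).trans (h1 m₀ hm₀ m₀ hm₀)) ?_
    rintro _ ⟨x, hx, rfl⟩ _ ⟨y, hy, rfl⟩
    rw [dist_eq_norm]; exact h1 x hx y hy
  linarith

theorem aux_weak_closed {E : Type*} [NormedAddCommGroup E] [NormedSpace ℝ E] (A : Set E)
    (hA : Convex ℝ A) (hc : IsClosed A) : IsClosed ((toWeakSpace ℝ E).symm ⁻¹' A) := by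
  have h := hA.toWeakSpace_closure ℝ
  rw [hc.closure_eq] at h
  have e : (toWeakSpace ℝ E).symm ⁻¹' A = toWeakSpace ℝ E '' A :=
    ((toWeakSpace ℝ E).toEquiv.image_eq_preimage_symm A).symm
  rw [e, h]
  exact isClosed_closure

theorem aux_main_s17 {X E : Type*} [TopologicalSpace X] [CompactSpace X] [T2Space X] [Nonempty X]
    [NormedAddCommGroup E] [NormedSpace ℝ E]
    (ι : X → E) (hinj : Function.Injective ι) (hconv : Convex ℝ (Set.range ι))
    (hclosed : ∀ A : Set E, Convex ℝ A → IsClosed A → IsClosed (ι ⁻¹' A))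
    (k : ℕ) (T : Fin k → Function.End X) (hTc : ∀ i, Continuous (T i))
    (hcomm : ∀ i j, T i * T j = T j * T i)
    (hpen : ∀ i, ∀ x, ∃ N : ℕ, ∀ n ≥ N, ∀ y,
      ‖ι ((T i ^ n : Function.End X) x) - ι ((T i ^ n : Function.End X) y)‖ ≤ ‖ι x - ι y‖) :
    ∃ x, ∀ i, T i x = x := by
  classical
  have : IsMulCommutative (Submonoid.closure (Set.range T)) := Submonoid.isMulCommutative_closure _ (by
    rintro _ ⟨i, rfl⟩ _ ⟨j, rfl⟩; exact hcomm i j)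
  let _inst : CommMonoid (Submonoid.closure (Set.range T)) :=
    { (inferInstance : Monoid (Submonoid.closure (Set.range T))) with
      mul_comm := fun a b => this.is_comm.comm a b }
  let t : Fin k → Submonoid.closure (Set.range T) :=
    fun i => ⟨T i, Submonoid.subset_closure ⟨i, rfl⟩⟩
  let P : Finset (Fin k) → (Fin k → ℕ) → X → X := fun I n =>
    ((∏ i ∈ I, t i ^ n i : Submonoid.closure (Set.range T)) : Function.End X)
  have hPins : ∀ i I n x, i ∉ I → P (insert i I) n x = (T i ^ n i : Function.End X) (P I n x) := by
    intro i I n x hi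
    simp only [P]
    rw [Finset.prod_insert hi]
    rfl
  have hP0 : ∀ n x, P ∅ n x = x := by
    intro n x
    simp only [P]
    rw [Finset.prod_empty]
    rfl
  have hPcongr : ∀ I n n', (∀ i ∈ I, n i = n' i) → P I n = P I n' := by
    intro I n n' h
    simp only [P]
    rw [Finset.prod_congr rfl fun i hi => by rw [h i hi]]
  have hpowc : ∀ i (n : ℕ), Continuous (T i ^ n : Function.End X) := by
    intro i n
    induction n with
    | zero => exact continuous_id
    | succ n ih => rw [pow_succ]; exact ih.comp (hTc i)
  have hPc : ∀ I n, Continuous (P I n) := by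
    intro I n
    induction I using Finset.induction_on with
    | empty => exact continuous_id.congr fun x => (hP0 n x).symm
    | insert i I hi ih => exact ((hpowc i (n i)).comp ih).congr fun x => (hPins i I n x hi).symm
  have hthick : ∀ (I : Finset (Fin k)) (u : X) (F : Finset (Fin k → ℕ)), ∃ r, ∀ n ∈ F, ∀ y,
      ‖ι (P I (r + n) u) - ι (P I (r + n) y)‖ ≤ ‖ι u - ι y‖ := by
    intro I u F
    induction I using Finset.induction_on with
    | empty => exact ⟨0, fun n _ y => by rw [hP0, hP0]⟩
    | insert i I hi ih =>
      obtain ⟨r, hr⟩ := ih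
      choose N hN using hpen i
      refine ⟨Function.update r i (F.sup fun n => N (P I (r + n) u)), fun n hn y => ?_⟩
      rw [hPins _ _ _ _ hi, hPins _ _ _ _ hi]
      have e : P I (Function.update r i (F.sup fun n => N (P I (r + n) u)) + n)
          = P I (r + n) := by
        refine hPcongr _ _ _ fun j hj => ?_
        have : j ≠ i := fun h => hi (h ▸ hj)
        simp [this]
      rw [e]
      refine (hN _ _ ?_ _).trans (hr n hn y)
      simp only [Pi.add_apply, Function.update_self]
      exact (Finset.le_sup (f := fun n => N (P I (r + n) u)) hn).trans (Nat.le_add_right _ _)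
  obtain ⟨x, hx⟩ := aux_fix ι hclosed (P Finset.univ) (hPc _)
    (by
      intro x
      simp only [P, Pi.zero_apply, pow_zero, Finset.prod_const_one]
      rfl)
    (by
      intro a b x
      simp only [P, Pi.add_apply, pow_add, Finset.prod_mul_distrib]
      rfl)
    (hthick _) hinj hconv
  refine ⟨x, fun i => ?_⟩
  have h := hx (Pi.single i 1)
  simp only [P] at h
  rw [Finset.prod_eq_single i (fun j _ hj => by simp [hj]) (by simp), Pi.single_eq_same,
    pow_one] at h
  exact h

/-- let `K` be a nonempty weakly compact convex subset of a Banach space and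
`T₁, …, T_k` a commuting family of weakly continuous self-maps of `K`, each pointwise
eventually nonexpansive.  Then `T₁, …, T_k` have a common fixed point. -/
theorem common_fixed_point_commuting_pointwiseEventually_weak
    {E : Type*} [NormedAddCommGroup E] [NormedSpace ℝ E] [CompleteSpace E]
    (K : Set E) (hKne : K.Nonempty) (hKconv : Convex ℝ K)
    -- `K` is weakly compact
    (hKcomp : IsCompact (toWeakSpace ℝ E '' K))
    (k : ℕ) (T : Fin k → E → E)
    (hmaps : ∀ i, Set.MapsTo (T i) K K)
    (hcomm : ∀ i j, ∀ x ∈ K, T i (T j x) = T j (T i x))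
    -- each `T i` is weakly continuous on `K`
    (hcont : ∀ i, ContinuousOn
      (fun x : WeakSpace ℝ E => toWeakSpace ℝ E (T i ((toWeakSpace ℝ E).symm x)))
      (toWeakSpace ℝ E '' K))
    -- each `T i` is pointwise eventually nonexpansive
    (hpen : ∀ i, ∀ x ∈ K, ∃ N : ℕ, ∀ n ≥ N, ∀ y ∈ K,
      ‖(T i)^[n] x - (T i)^[n] y‖ ≤ ‖x - y‖) :
    ∃ x₀ ∈ K, ∀ i, T i x₀ = x₀ := by
  have hX : IsCompact (toWeakSpace ℝ E '' K) := hKcomp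
  let W : Set (WeakSpace ℝ E) := toWeakSpace ℝ E '' K
  have : CompactSpace W := isCompact_iff_compactSpace.1 hKcomp
  have : Nonempty W := (hKne.image _).to_subtype
  let ι : W → E := fun x => (toWeakSpace ℝ E).symm x.1
  have hιK : ∀ x : W, ι x ∈ K := by
    rintro ⟨_, x, hx, rfl⟩
    simpa [ι] using hx
  let T' : Fin k → Function.End W := fun i x =>
    ⟨toWeakSpace ℝ E (T i (ι x)), T i (ι x), hmaps i (hιK x), rfl⟩
  have hT' : ∀ i x, ι (T' i x) = T i (ι x) := fun i x => by simp [ι, T']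
  have hinj : Function.Injective ι := fun x y h =>
    Subtype.ext ((toWeakSpace ℝ E).symm.injective h)
  have hrange : Set.range ι = K := by
    ext x
    refine ⟨?_, fun hx => ⟨⟨toWeakSpace ℝ E x, x, hx, rfl⟩, by simp [ι]⟩⟩
    rintro ⟨y, rfl⟩; exact hιK y
  have hpow : ∀ i (n : ℕ) x, ι ((T' i ^ n : Function.End W) x) = (T i)^[n] (ι x) := by
    intro i n
    induction n with
    | zero => intro x; rfl
    | succ n ih =>
      intro x
      rw [pow_succ, Function.iterate_succ_apply, ← hT', ← ih]
      rfl
  obtain ⟨x, hx⟩ := aux_main_s17 ι hinj (hrange ▸ hKconv)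
    (fun A hA hc => (aux_weak_closed A hA hc).preimage continuous_subtype_val) k T'
    (fun i => Continuous.subtype_mk ((continuousOn_iff_continuous_restrict.1 (hcont i))) _)
    (by
      intro i j
      funext x
      apply hinj
      change ι (T' i (T' j x)) = ι (T' j (T' i x))
      simp only [hT']
      exact hcomm i j _ (hιK x))
    (by
      intro i x
      obtain ⟨N, hN⟩ := hpen i (ι x) (hιK x)
      refine ⟨N, fun n hn y => ?_⟩
      rw [hpow, hpow]
      exact hN n hn _ (hιK y))
  exact ⟨ι x, hιK x, fun i => by rw [← hT', hx]⟩
end
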